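/- arXiv:2001.08079 — 2 statements merged into one kernel-verified Lean document; each statement's English description precedes it below -/
import Mathlib

section
/- Let n ≡ 3 (mod 4) be a positive integer. Then, modulo Φ_n(q)^2 · Φ_{n^2}(q)^2, the sum over k from 0 to n^2-1 of (1+q^{4k+1})(q^2;q^4)_k^3 / ((1+q)(q^4;q^4)_k^3) · q^k is congruent to [n^2]_{q^2} · (q^3;q^4)_{(n^2-1)/2} / (q^5;q^4)_{(n^2-1)/2} · q^{(1-n^2)/2}. -/
/-!
Replace two of the three factors `1 - y` of each `y = q ^ (4i + 2)` or `q ^ (4i + 4)` by `1 - b y`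
and `1 - y / b`. The deformed sum depends on `b` only through `u = (b - 1)² / b`, it is the original
sum at `u = 0`, and at `b = q ^ (4M + 2)` it terminates and has a closed form, found by a
Wilf–Zeilberger argument in the shift `b ↦ b q⁴`.

For `N = 2M + 1`, all denominators below `N` are units at `Φ_N` and `q ^ (4M + 2) = q ^ (2N)`, so
the closed form is attained at a `u` divisible by `Φ_N²`; this gives the congruence modulo `Φ_N²`.

For a proper divisor `n ≡ 3 (mod 4)` of `N = n r`, both sides are divisible by `Φ_n²`. For the
closed form this is a count of factors. For the sum, put `u = (1 - q ^ n)² w` and clear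
denominators: modulo `Φ_n²` the result is a polynomial in `w` of degree less than `r`. It is
divisible by `Φ_n²` at the `r` values of `w` coming from `b = q ^ (n (4j + 2))`, `j < r`, where the
closed form applies. These are congruent to `(4j + 2)²` modulo `Φ_n`, hence remain distinct in the
residue field, and Lagrange interpolation carries the divisibility over to `w = 0`.
-/

open Polynomial Finset

/-- The variable `q` as an element of the field of rational functions `ℚ(q)`. -/
noncomputable def Q : RatFunc ℚ := RatFunc.X

/-- The q-shifted factorial `(a;b)_k = (1-a)(1-ab)⋯(1-ab^{k-1})` in `ℚ(q)`. -/
noncomputable def qPoch (a b : RatFunc ℚ) (k : ℕ) : RatFunc ℚ :=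
  ∏ i ∈ Finset.range k, (1 - a * b ^ i)

section TerminatingSum

variable {K : Type*} [Field K]

/-- The deformation parameter `b + b⁻¹ - 2`, which sees `b` only up to inversion and vanishes to
second order at `b = 1`. -/
def deformParam (b : K) : K := (b - 1) ^ 2 / b

/-- The deformation `(1 - y)(1 - b y)(1 - y / b)` of `(1 - y)³`, as a function of `y` and of
`u = b + b⁻¹ - 2`. -/
def cubicFactor (y u : K) : K := (1 - y) * ((1 - y) ^ 2 - y * u)

/-- The deformation `q ^ k (q², b q², q² / b; q⁴)_k / (q⁴, b q⁴, q⁴ / b; q⁴)_k` of the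
hypergeometric term of the sum, where `u = b + b⁻¹ - 2`. -/
def deformedTerm (q u : K) (k : ℕ) : K :=
  q ^ k * ∏ i ∈ range k, cubicFactor (q ^ (4 * i + 2)) u / cubicFactor (q ^ (4 * i + 4)) u

/-- The deformed sum, truncated at `L`; at `u = 0` it is the sum of the congruence without its
prefactor `1 / (1 + q)`. -/
def deformedSum (q u : K) (L : ℕ) : K :=
  ∑ k ∈ range L, (1 + q ^ (4 * k + 1)) * deformedTerm q u k

/-- The right-hand side `[2M+1]_{q²} (q³; q⁴)_M / (q⁵; q⁴)_M q ^ (-M)` of the congruence. -/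
def closedForm (q : K) (M : ℕ) : K :=
  (1 - q ^ (4 * M + 2)) / (1 - q ^ 2) *
    (∏ i ∈ range M, (1 - q ^ (4 * i + 3)) / (1 - q ^ (4 * i + 5))) / q ^ M

lemma cubicFactor_zero_right (y : K) : cubicFactor y 0 = (1 - y) ^ 3 := by
  rw [cubicFactor, mul_zero, sub_zero, ← pow_succ']

lemma cubicFactor_deformParam {b : K} (hb : b ≠ 0) (y : K) :
    cubicFactor y (deformParam b) = (1 - y) * (1 - b * y) * (b - y) / b := by
  rw [cubicFactor, deformParam]
  field_simp
  ring

lemma deformedTerm_zero (q u : K) : deformedTerm q u 0 = 1 := by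
  simp [deformedTerm]

lemma deformedTerm_succ_mul {q b : K} (hq : ∀ e ≠ 0, 1 - q ^ e ≠ 0) (hb : b ≠ 0) {k : ℕ}
    (hb₁ : 1 - b * q ^ (4 * k + 4) ≠ 0) (hb₂ : b - q ^ (4 * k + 4) ≠ 0) :
    deformedTerm q (deformParam b) (k + 1) *
        ((1 - q ^ (4 * k + 4)) * (1 - b * q ^ (4 * k + 4)) * (b - q ^ (4 * k + 4))) =
      deformedTerm q (deformParam b) k *
        (q * (1 - q ^ (4 * k + 2)) * (1 - b * q ^ (4 * k + 2)) * (b - q ^ (4 * k + 2))) := by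
  have hq₁ := hq (4 * k + 4) (by omega)
  rw [deformedTerm, prod_range_succ, cubicFactor_deformParam hb, cubicFactor_deformParam hb,
    div_div_div_cancel_right₀ hb, deformedTerm]
  field_simp
  ring

lemma deformedTerm_shift {q b : K} (hq : ∀ e ≠ 0, 1 - q ^ e ≠ 0) (hq₀ : q ≠ 0)
    (hb : b ≠ 0) (hb₁ : ∀ i, 1 - b * q ^ i ≠ 0) (hb₂ : ∀ i, b - q ^ (4 * i) ≠ 0) (k : ℕ) :
    deformedTerm q (deformParam (b * q ^ 4)) k *
        ((q ^ (4 * k) - b * q ^ 2) * (1 - b * q ^ (4 * k + 4)) * (b - 1)) =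
      deformedTerm q (deformParam b) k *
        ((1 - b * q ^ (4 * k + 2)) * (1 - b * q ^ 4) * (b - q ^ (4 * k))) := by
  induction k with
  | zero => simp only [deformedTerm_zero]; ring
  | succ k ih =>
    have hb₄ : b * q ^ 4 ≠ 0 := mul_ne_zero hb (pow_ne_zero 4 hq₀)
    have hden : 1 - b * q ^ 4 * q ^ (4 * k + 4) ≠ 0 := by convert hb₁ (4 * k + 8) using 1; ring
    have hdiff : b * q ^ 4 - q ^ (4 * k + 4) ≠ 0 := by
      convert mul_ne_zero (hb₂ k) (pow_ne_zero 4 hq₀) using 1; ring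
    have hsucc := deformedTerm_succ_mul hq hb (hb₁ (4 * k + 4)) (hb₂ (k + 1))
    have hsucc' := deformedTerm_succ_mul hq hb₄ hden hdiff
    apply mul_left_cancel₀ (mul_ne_zero (mul_ne_zero (hq (4 * k + 4) (by omega))
      (hb₁ (4 * k + 4))) hdiff)
    simp only [mul_add, pow_add] at ih hsucc hsucc' ⊢
    linear_combination
      (1 - b * (q ^ (4 * k) * q ^ 4)) * (q ^ (4 * k) * q ^ 4 - b * q ^ 2) * (b - 1) * hsucc'
      - (b - q ^ (4 * k)) * q ^ 4 * (1 - b * q ^ (4 * k) * q ^ 6) * (1 - b * q ^ 4) * hsucc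
      + q ^ 5 * (1 - q ^ (4 * k) * q ^ 2) * (1 - b * q ^ (4 * k) * q ^ 6)
        * (b - q ^ (4 * k) * q ^ 2) * ih

-- The right-hand side is the Wilf–Zeilberger certificate of the shift `b ↦ b q⁴`; it contains a
-- deformed term at `b q⁴`, so it vanishes as soon as the sum at `b q⁴` has terminated.
lemma deformedSum_shift {q b : K} (hq : ∀ e ≠ 0, 1 - q ^ e ≠ 0) (hq₀ : q ≠ 0)
    (hb : b ≠ 0) (hb₁ : ∀ i, 1 - b * q ^ i ≠ 0) (hb₂ : ∀ i, b - q ^ (4 * i) ≠ 0) (L : ℕ) :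
    (1 - b * q ^ (4 * L + 2)) *
        ((1 - b) * (1 - b * q ^ 3) * q * deformedSum q (deformParam (b * q ^ 4)) L -
          (1 - b * q ^ 4) * (1 - b * q) * deformedSum q (deformParam b) L) =
      q * (1 + b * q ^ 2) * (b - 1) * (1 - q ^ (4 * L)) * (1 - b * q ^ (4 * L + 4)) *
        deformedTerm q (deformParam (b * q ^ 4)) L := by
  induction L with
  | zero => simp [deformedSum]
  | succ k ih =>
    have hb₄ : b * q ^ 4 ≠ 0 := mul_ne_zero hb (pow_ne_zero 4 hq₀)
    have hden : 1 - b * q ^ 4 * q ^ (4 * k + 4) ≠ 0 := by convert hb₁ (4 * k + 8) using 1; ring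
    have hdiff : b * q ^ 4 - q ^ (4 * k + 4) ≠ 0 := by
      convert mul_ne_zero (hb₂ k) (pow_ne_zero 4 hq₀) using 1; ring
    have hsucc := deformedTerm_succ_mul hq hb₄ hden hdiff
    have hterm := deformedTerm_shift hq hq₀ hb hb₁ hb₂ k
    rw [deformedSum, sum_range_succ, deformedSum, sum_range_succ, ← deformedSum, ← deformedSum]
    apply mul_left_cancel₀ (mul_ne_zero (hb₁ (4 * k + 2)) hdiff)
    simp only [mul_add, pow_add] at ih hsucc hterm ⊢
    linear_combination
      (b - q ^ (4 * k)) * q ^ 4 * (1 - b * q ^ (4 * k) * q ^ 6) * ih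
      + (1 + q ^ (4 * k) * q) * (1 - b * q ^ (4 * k) * q ^ 6) * q ^ 4 * (1 - b * q) * hterm
      - q * (1 + b * q ^ 2) * (b - 1) * (1 - b * q ^ (4 * k) * q ^ 2) * hsucc

lemma deformedTerm_eq_zero {q : K} (hq₀ : q ≠ 0) {M k : ℕ} (h : M < k) :
    deformedTerm q (deformParam (q ^ (4 * M + 2))) k = 0 := by
  rw [deformedTerm, prod_eq_zero (mem_range.2 h), mul_zero]
  rw [cubicFactor_deformParam (pow_ne_zero _ hq₀), sub_self, mul_zero, zero_div, zero_div]

lemma pow_sub_pow_ne_zero {q : K} (hq : ∀ e ≠ 0, 1 - q ^ e ≠ 0) (hq₀ : q ≠ 0) {i j : ℕ}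
    (hij : i ≠ j) : q ^ i - q ^ j ≠ 0 := by
  wlog h : i < j generalizing i j
  · rw [← neg_sub, neg_ne_zero]
    exact this hij.symm (by omega)
  obtain ⟨d, rfl⟩ := Nat.exists_eq_add_of_lt h
  rw [add_assoc, pow_add, ← mul_one_sub]
  exact mul_ne_zero (pow_ne_zero i hq₀) (hq _ d.succ_ne_zero)

lemma closedForm_succ_mul {q : K} (hq : ∀ e ≠ 0, 1 - q ^ e ≠ 0) (hq₀ : q ≠ 0) (M : ℕ) :
    (1 - q ^ (4 * M + 2)) * (1 - q ^ (4 * M + 5)) * q * closedForm q (M + 1) =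
      (1 - q ^ (4 * M + 6)) * (1 - q ^ (4 * M + 3)) * closedForm q M := by
  have h₂ := hq 2 two_ne_zero
  have h₅ := hq (4 * M + 5) (by omega)
  rw [closedForm, closedForm, prod_range_succ]
  field_simp
  ring

theorem deformedSum_eq_closedForm {q : K} (hq : ∀ e ≠ 0, 1 - q ^ e ≠ 0) (hq₀ : q ≠ 0)
    {M L : ℕ} (h : M < L) :
    deformedSum q (deformParam (q ^ (4 * M + 2))) L = (1 + q) * closedForm q M := by
  induction M with
  | zero =>
    have h₂ := hq 2 two_ne_zero
    obtain ⟨L, rfl⟩ := Nat.exists_eq_add_of_lt h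
    rw [deformedSum, sum_range_succ', sum_eq_zero fun k _ => by
      rw [deformedTerm_eq_zero hq₀ k.succ_pos, mul_zero]]
    simp [deformedTerm_zero, closedForm, h₂]
  | succ M ih =>
    have hb₁ (i : ℕ) : 1 - q ^ (4 * M + 2) * q ^ i ≠ 0 := by
      rw [← pow_add]; exact hq _ (by omega)
    have hb₂ (i : ℕ) : q ^ (4 * M + 2) - q ^ (4 * i) ≠ 0 :=
      pow_sub_pow_ne_zero hq hq₀ (by omega)
    have hshift := deformedSum_shift hq hq₀ (pow_ne_zero _ hq₀) hb₁ hb₂ L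
    rw [← pow_add q _ 4, show 4 * M + 2 + 4 = 4 * (M + 1) + 2 by ring, deformedTerm_eq_zero hq₀ h,
      mul_zero, ih (by omega), mul_eq_zero_iff_left (hb₁ _)] at hshift
    apply mul_left_cancel₀ (mul_ne_zero (mul_ne_zero (hq (4 * M + 2) (by omega))
      (hq (4 * M + 5) (by omega))) hq₀)
    linear_combination hshift - (1 + q) * closedForm_succ_mul hq hq₀ M

end TerminatingSum

section Valuation

lemma val_mul_sub_mul_le {R Γ : Type*} [CommRing R] [LinearOrderedCommMonoidWithZero Γ]
    (v : Valuation R Γ) {g : Γ} {a b c d : R} (hb : v b ≤ 1) (hc : v c ≤ 1)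
    (hac : v (a - c) ≤ g) (hbd : v (b - d) ≤ g) : v (a * b - c * d) ≤ g := by
  rw [show a * b - c * d = (a - c) * b + c * (b - d) by ring]
  refine v.map_add_le ?_ ?_ <;> rw [map_mul]
  · exact mul_le_of_le_of_le_one hac hb
  · exact mul_le_of_le_one_of_le hc hbd

lemma val_prod_le_one {R Γ ι : Type*} [CommRing R] [LinearOrderedCommMonoidWithZero Γ]
    (v : Valuation R Γ) {s : Finset ι} {f : ι → R} (hf : ∀ i ∈ s, v (f i) ≤ 1) :
    v (∏ i ∈ s, f i) ≤ 1 := by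
  rw [map_prod]
  exact prod_le_one' hf

lemma val_prod_sub_prod_le {R Γ ι : Type*} [CommRing R] [LinearOrderedCommMonoidWithZero Γ]
    (v : Valuation R Γ) {g : Γ} {s : Finset ι} {f f' : ι → R} (hf : ∀ i ∈ s, v (f i) ≤ 1)
    (hf' : ∀ i ∈ s, v (f' i) ≤ 1) (h : ∀ i ∈ s, v (f i - f' i) ≤ g) :
    v (∏ i ∈ s, f i - ∏ i ∈ s, f' i) ≤ g := by
  classical
  induction s using Finset.induction_on with
  | empty => simp
  | insert a s ha ih =>
    rw [forall_mem_insert] at hf hf' h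
    rw [prod_insert ha, prod_insert ha]
    exact val_mul_sub_mul_le v (val_prod_le_one v hf.2) hf'.1 h.1 (ih hf.2 hf'.2 h.2)

variable {K : Type*} [Field K] {Γ : Type*} [LinearOrderedCommGroupWithZero Γ] (v : Valuation K Γ)

lemma val_div_sub_div_le {g : Γ} {a b c d : K} (hb : v b = 1) (hc : v c ≤ 1) (hd : v d = 1)
    (hac : v (a - c) ≤ g) (hbd : v (b - d) ≤ g) : v (a / b - c / d) ≤ g := by
  have ne_zero {x : K} (hx : v x = 1) : x ≠ 0 := v.ne_zero_iff.1 (hx ▸ one_ne_zero)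
  rw [div_sub_div _ _ (ne_zero hb) (ne_zero hd), map_div₀, map_mul, hb, hd, mul_one, div_one,
    mul_comm b]
  exact val_mul_sub_mul_le v hd.le hc hac (by rwa [v.map_sub_swap])

lemma val_geom_sum_sub_natCast_lt {x : K} (hx : v (1 - x) < 1) (c : ℕ) :
    v (∑ i ∈ range c, x ^ i - c) < 1 := by
  have hx₁ : v x ≤ 1 := (v.map_eq_of_sub_lt (by rwa [v.map_sub_swap, map_one])).trans_le
    (map_one v).le
  have hsum : ∑ i ∈ range c, x ^ i - c = ∑ i ∈ range c, -((1 - x) * ∑ j ∈ range i, x ^ j) := by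
    simp [mul_neg_geom_sum]
  rw [hsum]
  refine v.map_sum_lt one_ne_zero fun i _ => ?_
  rw [v.map_neg, map_mul]
  refine mul_lt_of_lt_of_le_one hx (v.map_sum_le fun j _ => ?_)
  rw [map_pow]
  exact pow_le_one' hx₁ j

lemma val_eval_le_of_nodes {ι : Type*} {g : Γ} {s : Finset ι} {w : ι → K}
    {f : K[X]} (hf : f.degree < #s) (hw : ∀ i ∈ s, v (w i) ≤ 1)
    (hsep : ∀ i ∈ s, ∀ j ∈ s, i ≠ j → v (w i - w j) = 1) (hfw : ∀ i ∈ s, v (f.eval (w i)) ≤ g)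
    {x : K} (hx : v x ≤ 1) : v (f.eval x) ≤ g := by
  classical
  have hinj : Set.InjOn w s := fun i hi j hj hij => by
    by_contra hne
    simpa [hij] using hsep i hi j hj hne
  rw [Lagrange.eq_interpolate hinj hf, Lagrange.interpolate_apply, eval_finsetSum]
  refine v.map_sum_le fun j hj => ?_
  rw [eval_mul, eval_C, map_mul, Lagrange.basis, eval_prod]
  refine mul_le_of_le_of_le_one (hfw j hj) (val_prod_le_one v fun i hi => ?_)
  obtain ⟨hij, hi⟩ := mem_erase.1 hi
  rw [Lagrange.basisDivisor, eval_mul, eval_C, map_mul, map_inv₀, hsep j hj i hi hij.symm,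
    inv_one, one_mul, eval_sub, eval_X, eval_C]
  exact v.map_sub_le hx (hw i hi)

lemma val_one_sub_le_one {y : K} (hy : v y ≤ 1) : v (1 - y) ≤ 1 :=
  v.map_sub_le (map_one v).le hy

lemma val_cubicFactor_le_one {y u : K} (hy : v y ≤ 1) (hu : v u ≤ 1) :
    v (cubicFactor y u) ≤ 1 := by
  have hy' := val_one_sub_le_one v hy
  rw [cubicFactor, map_mul]
  refine mul_le_one' hy' (v.map_sub_le ?_ ?_)
  · rw [map_pow]; exact pow_le_one' hy' 2
  · rw [map_mul]; exact mul_le_one' hy hu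

lemma val_cubicFactor_eq_one {y u : K} (hy : v y ≤ 1) (hy' : v (1 - y) = 1) (hu : v u < 1) :
    v (cubicFactor y u) = 1 := by
  have hyu : v (y * u) < v ((1 - y) ^ 2) := by
    rw [map_mul, map_pow, hy', one_pow]
    exact mul_lt_of_le_one_of_lt hy hu
  rw [cubicFactor, map_mul, v.map_sub_eq_of_lt_left hyu, map_pow, hy', one_pow, one_mul]

lemma val_cubicFactor_sub_le {y : K} (hy : v y ≤ 1) (u u' : K) :
    v (cubicFactor y u - cubicFactor y u') ≤ v (u - u') := by
  rw [show cubicFactor y u - cubicFactor y u' = -((1 - y) * y * (u - u')) by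
    rw [cubicFactor, cubicFactor]; ring, v.map_neg, map_mul, map_mul]
  exact mul_le_of_le_one_left' (mul_le_one' (val_one_sub_le_one v hy) hy)

end Valuation

section NearPrimitiveRoot

variable {K : Type*} [Field K] {Γ : Type*} [LinearOrderedCommGroupWithZero Γ]

/-- The exponent of `1 - q ^ n` in `1 - q ^ e` when `q` is near a primitive `n`-th root of unity
in residue characteristic zero. -/
def dvdIndicator (n e : ℕ) : ℕ := if n ∣ e then 1 else 0

/-- The cofactor of the power of `1 - q ^ n` in `1 - q ^ e`. -/
def unitPart (q : K) (n e : ℕ) : K := (1 - q ^ e) / (1 - q ^ n) ^ dvdIndicator n e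

/-- `q` reduces to a primitive `n`-th root of unity in the residue field of `v`, which has
characteristic zero, without being an `n`-th root of unity itself. This is the local situation of
the variable `q` at the place of `Φ_n(q)`. -/
structure IsNearPrimitiveRoot (v : Valuation K Γ) (q : K) (n : ℕ) : Prop where
  one_sub_pow_self_ne_zero : 1 - q ^ n ≠ 0
  val_one_sub_pow_self_lt_one : v (1 - q ^ n) < 1
  val_one_sub_pow_of_not_dvd : ∀ e, ¬n ∣ e → v (1 - q ^ e) = 1
  val_natCast : ∀ m : ℕ, m ≠ 0 → v (m : K) = 1

namespace IsNearPrimitiveRoot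

variable {v : Valuation K Γ} {q : K} {n : ℕ} (hq : IsNearPrimitiveRoot v q n)
include hq

lemma order_ne_zero : n ≠ 0 := by
  rintro rfl
  exact hq.one_sub_pow_self_ne_zero (by simp)

lemma val_pow (e : ℕ) : v (q ^ e) = 1 := by
  have hqn : v (q ^ n) = 1 := by
    refine (v.map_eq_of_sub_lt (y := q ^ n) ?_).trans v.map_one
    rw [v.map_sub_swap, v.map_one]
    exact hq.val_one_sub_pow_self_lt_one
  rw [map_pow] at hqn ⊢
  rw [(pow_eq_one_iff_left hq.order_ne_zero).1 hqn, one_pow]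

lemma ne_zero : q ≠ 0 :=
  v.ne_zero_iff.1 (by simpa using (hq.val_pow 1).trans_ne one_ne_zero)

lemma val_one_add_pow_le_one (e : ℕ) : v (1 + q ^ e) ≤ 1 :=
  v.map_add_le (map_one v).le (hq.val_pow e).le

lemma val_natCast_sub_natCast {a b : ℕ} (hab : a ≠ b) : v (a - b : K) = 1 := by
  wlog h : b < a generalizing a b
  · rw [v.map_sub_swap]
    exact this hab.symm (by omega)
  rw [← Nat.cast_sub h.le]
  exact hq.val_natCast _ (by omega)

lemma val_unitPart {e : ℕ} (he : e ≠ 0) : v (unitPart q n e) = 1 := by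
  rw [unitPart, dvdIndicator]
  split_ifs with hdvd
  · obtain ⟨c, rfl⟩ := hdvd
    have hc := hq.val_natCast c (right_ne_zero_of_mul he)
    rw [pow_one, pow_mul, ← mul_neg_geom_sum,
      mul_div_cancel_left₀ _ hq.one_sub_pow_self_ne_zero, v.map_eq_of_sub_lt (x := (c : K)), hc]
    rw [hc]
    exact val_geom_sum_sub_natCast_lt v hq.val_one_sub_pow_self_lt_one c
  · rw [pow_zero, div_one]
    exact hq.val_one_sub_pow_of_not_dvd e hdvd

lemma one_sub_pow_eq (e : ℕ) :
    1 - q ^ e = (1 - q ^ n) ^ dvdIndicator n e * unitPart q n e :=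
  (mul_div_cancel₀ _ (pow_ne_zero _ hq.one_sub_pow_self_ne_zero)).symm

lemma val_one_sub_pow {e : ℕ} (he : e ≠ 0) :
    v (1 - q ^ e) = v (1 - q ^ n) ^ dvdIndicator n e := by
  rw [hq.one_sub_pow_eq e, map_mul, hq.val_unitPart he, mul_one, map_pow]

lemma one_sub_pow_ne_zero (e : ℕ) (he : e ≠ 0) : 1 - q ^ e ≠ 0 :=
  v.ne_zero_iff.1 <| (hq.val_one_sub_pow he).trans_ne <|
    pow_ne_zero _ (v.ne_zero_iff.2 hq.one_sub_pow_self_ne_zero)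

lemma val_one_add (hn : ¬n ∣ 2) : v (1 + q) = 1 := by
  have h₁ := hq.val_one_sub_pow_of_not_dvd 1 fun h => hn (h.trans (one_dvd 2))
  have h₂ := hq.val_one_sub_pow_of_not_dvd 2 hn
  rwa [show 1 - q ^ 2 = (1 - q ^ 1) * (1 + q) by ring, map_mul, h₁, one_mul] at h₂

end IsNearPrimitiveRoot

end NearPrimitiveRoot

section FullOrder

lemma dvd_four_mul_iff {n m : ℕ} (hn : Odd n) : n ∣ 4 * m ↔ n ∣ m :=
  ((Nat.coprime_two_right.2 hn).pow_right 2).dvd_mul_left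

variable {K : Type*} [Field K] {Γ : Type*} [LinearOrderedCommGroupWithZero Γ]
  {v : Valuation K Γ} {q : K}

lemma val_deformedTerm_sub_le {N : ℕ} (hq : IsNearPrimitiveRoot v q N) (hN : Odd N) {u u' : K}
    (hu : v u < 1) (hu' : v u' < 1) {k : ℕ} (hk : k < N) :
    v (deformedTerm q u k - deformedTerm q u' k) ≤ v (u - u') := by
  have hnum (e : ℕ) {u : K} (hu : v u < 1) : v (cubicFactor (q ^ e) u) ≤ 1 :=
    val_cubicFactor_le_one v (hq.val_pow e).le hu.le
  have hden {i : ℕ} (hi : i ∈ range k) {u : K} (hu : v u < 1) :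
      v (cubicFactor (q ^ (4 * i + 4)) u) = 1 := by
    refine val_cubicFactor_eq_one v (hq.val_pow _).le (hq.val_one_sub_pow_of_not_dvd _ ?_) hu
    rw [show 4 * i + 4 = 4 * (i + 1) by ring, dvd_four_mul_iff hN]
    exact Nat.not_dvd_of_pos_of_lt i.succ_pos (by rw [mem_range] at hi; omega)
  have hratio {i : ℕ} (hi : i ∈ range k) {u : K} (hu : v u < 1) :
      v (cubicFactor (q ^ (4 * i + 2)) u / cubicFactor (q ^ (4 * i + 4)) u) ≤ 1 := by
    rw [map_div₀, hden hi hu, div_one]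
    exact hnum _ hu
  rw [deformedTerm, deformedTerm, ← mul_sub, map_mul, hq.val_pow, one_mul]
  refine val_prod_sub_prod_le v (fun i hi => hratio hi hu) (fun i hi => hratio hi hu')
    fun i hi => ?_
  exact val_div_sub_div_le v (hden hi hu) (hnum _ hu') (hden hi hu')
    (val_cubicFactor_sub_le v (hq.val_pow _).le u u')
    (val_cubicFactor_sub_le v (hq.val_pow _).le u u')

lemma val_deformedSum_sub_le {N : ℕ} (hq : IsNearPrimitiveRoot v q N) (hN : Odd N) {u u' : K}
    (hu : v u < 1) (hu' : v u' < 1) :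
    v (deformedSum q u N - deformedSum q u' N) ≤ v (u - u') := by
  rw [deformedSum, deformedSum, ← sum_sub_distrib]
  refine v.map_sum_le fun k hk => ?_
  rw [← mul_sub, map_mul]
  exact mul_le_of_le_one_of_le (hq.val_one_add_pow_le_one _)
    (val_deformedTerm_sub_le hq hN hu hu' (mem_range.1 hk))

theorem val_deformedSum_zero_sub_closedForm_le {M : ℕ}
    (hq : IsNearPrimitiveRoot v q (2 * M + 1)) :
    v (deformedSum q 0 (2 * M + 1) - (1 + q) * closedForm q M) ≤ v (1 - q ^ (2 * M + 1)) ^ 2 := by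
  have hu : v (deformParam (q ^ (4 * M + 2))) ≤ v (1 - q ^ (2 * M + 1)) ^ 2 := by
    rw [deformParam, map_div₀, hq.val_pow, div_one, map_pow, v.map_sub_swap,
      show 1 - q ^ (4 * M + 2) = (1 - q ^ (2 * M + 1)) * (1 + q ^ (2 * M + 1)) by ring, map_mul]
    exact pow_le_pow_left' (mul_le_of_le_one_right' (hq.val_one_add_pow_le_one _)) 2
  have hu' : v (deformParam (q ^ (4 * M + 2))) < 1 :=
    hu.trans_lt (pow_lt_one₀ zero_le hq.val_one_sub_pow_self_lt_one two_ne_zero)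
  rw [← deformedSum_eq_closedForm hq.one_sub_pow_ne_zero hq.ne_zero (show M < 2 * M + 1 by omega),
    v.map_sub_swap]
  refine (val_deformedSum_sub_le hq (odd_two_mul_add_one M) hu' (by simp)).trans ?_
  rwa [sub_zero]

end FullOrder

section Counting

lemma sum_dvdIndicator {n : ℕ} (hn : Odd n) {s c d : ℕ} (hs : s < n)
    (h : 4 * (s + 1) = d + n * c) (k : ℕ) :
    ∑ i ∈ range k, dvdIndicator n (4 * i + d) = (k + s) / n := by
  induction k with
  | zero => simp [Nat.div_eq_of_lt hs]
  | succ k ih =>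
    have hdvd : n ∣ 4 * k + d ↔ n ∣ k + s + 1 := by
      rw [← dvd_four_mul_iff (m := k + s + 1) hn,
        show 4 * (k + s + 1) = 4 * k + d + n * c by omega, Nat.dvd_add_left (dvd_mul_right n c)]
    rw [sum_range_succ, ih, add_right_comm k 1 s, Nat.succ_div, dvdIndicator, if_congr hdvd rfl rfl]

lemma sum_dvdIndicator_add_two {n : ℕ} (hn : Odd n) (k : ℕ) :
    ∑ i ∈ range k, dvdIndicator n (4 * i + 2) = (k + n / 2) / n := by
  obtain ⟨t, rfl⟩ := hn
  exact sum_dvdIndicator (c := 2) ⟨t, rfl⟩ (by omega) (by omega) k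

lemma sum_dvdIndicator_add_four {n : ℕ} (hn : Odd n) (k : ℕ) :
    ∑ i ∈ range k, dvdIndicator n (4 * i + 4) = k / n :=
  sum_dvdIndicator (s := 0) (c := 0) hn hn.pos (by omega) k

end Counting

section ProperMultiple

variable {K : Type*} [Field K] {Γ : Type*} [LinearOrderedCommGroupWithZero Γ]
  {v : Valuation K Γ} {q : K} {n : ℕ}

section ClearedFactors

/-- What remains of `cubicFactor (q ^ e) u` after taking out the `unitPart` and all powers of
`1 - q ^ n`, in terms of the rescaled parameter `w = u / (1 - q ^ n)²`. -/
def deformedFactor (q : K) (n e : ℕ) (w : K) : K :=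
  unitPart q n e ^ 2 - q ^ e * (if n ∣ e then 1 else (1 - q ^ n) ^ 2) * w

/-- The part of `deformedFactor`, as a polynomial in `w`, that matters modulo `(1 - q ^ n)²`. It has
degree one only when `n ∣ e`. -/
noncomputable def truncatedFactor (q : K) (n e : ℕ) : K[X] :=
  C (unitPart q n e ^ 2) - C (if n ∣ e then q ^ e else 0) * X

lemma cubicFactor_eq (hq : IsNearPrimitiveRoot v q n) (e : ℕ) (w : K) :
    cubicFactor (q ^ e) ((1 - q ^ n) ^ 2 * w) =
      ((1 - q ^ n) ^ 3) ^ dvdIndicator n e * (unitPart q n e * deformedFactor q n e w) := by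
  rw [cubicFactor, hq.one_sub_pow_eq e, deformedFactor, dvdIndicator]
  split_ifs <;> ring

lemma natDegree_truncatedFactor_le (q : K) (n e : ℕ) :
    (truncatedFactor q n e).natDegree ≤ dvdIndicator n e := by
  rw [truncatedFactor, dvdIndicator]
  split_ifs
  · compute_degree
  · simp

lemma eval_truncatedFactor (q : K) (n e : ℕ) (w : K) :
    (truncatedFactor q n e).eval w = unitPart q n e ^ 2 - (if n ∣ e then q ^ e else 0) * w := by
  simp [truncatedFactor]

lemma val_deformedFactor_le_one (hq : IsNearPrimitiveRoot v q n) {e : ℕ} (he : e ≠ 0) {w : K}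
    (hw : v w ≤ 1) : v (deformedFactor q n e w) ≤ 1 := by
  have hp : v (if n ∣ e then 1 else (1 - q ^ n) ^ 2) ≤ 1 := by
    split_ifs
    · rw [map_one]
    · rw [map_pow]
      exact pow_le_one' hq.val_one_sub_pow_self_lt_one.le 2
  refine v.map_sub_le ?_ ?_
  · rw [map_pow, hq.val_unitPart he, one_pow]
  · rw [map_mul, map_mul, hq.val_pow, one_mul]
    exact mul_le_one' hp hw

lemma val_deformedFactor_sub_eval_truncatedFactor_le (hq : IsNearPrimitiveRoot v q n) (e : ℕ)
    {w : K} (hw : v w ≤ 1) :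
    v (deformedFactor q n e w - (truncatedFactor q n e).eval w) ≤ v (1 - q ^ n) ^ 2 := by
  rw [deformedFactor, eval_truncatedFactor]
  split_ifs
  · simp
  · rw [show ∀ a b : K, a - b - (a - 0 * w) = -b by intros; ring, v.map_neg, map_mul, map_mul,
      hq.val_pow, one_mul, map_pow]
    exact mul_le_of_le_of_le_one le_rfl hw

lemma val_eval_truncatedFactor_le_one (hq : IsNearPrimitiveRoot v q n) {e : ℕ} (he : e ≠ 0)
    {w : K} (hw : v w ≤ 1) : v ((truncatedFactor q n e).eval w) ≤ 1 := by
  rw [← sub_sub_cancel (deformedFactor q n e w) ((truncatedFactor q n e).eval w)]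
  exact v.map_sub_le (val_deformedFactor_le_one hq he hw)
    ((val_deformedFactor_sub_eval_truncatedFactor_le hq e hw).trans
      (pow_le_one' hq.val_one_sub_pow_self_lt_one.le 2))

end ClearedFactors

section ClearedSum

/-- The product of `f` over the numerator indices of the `k`-th term and over the denominator
indices that remain after the sum is multiplied by the common denominator with `m` factors. -/
def clearedProd {R : Type*} [CommMonoid R] (f : ℕ → R) (m k : ℕ) : R :=
  (∏ i ∈ range k, f (4 * i + 2)) * ∏ i ∈ Ico k m, f (4 * i + 4)

/-- The part of the `k`-th term of the deformed sum that does not depend on the parameter. -/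
def clearedCoeff (q : K) (n k : ℕ) : K :=
  (1 + q ^ (4 * k + 1)) * q ^ k * ((1 - q ^ n) ^ 3) ^ ((k + n / 2) / n - k / n) *
    ∏ i ∈ range k, unitPart q n (4 * i + 2) / unitPart q n (4 * i + 4)

/-- The polynomial in `w` that agrees, modulo `(1 - q ^ n)²`, with the first `m + 1` terms of the
deformed sum multiplied by their common denominator. The terms left out carry a factor
`(1 - q ^ n)³`, and they are the ones whose degree would be too large for interpolation. -/
noncomputable def truncatedSum (q : K) (n m : ℕ) : K[X] :=
  ∑ k ∈ range (m + 1) with (k + n / 2) / n = k / n,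
    C (clearedCoeff q n k) * clearedProd (truncatedFactor q n) m k

lemma clearedCoeff_mul (hq : IsNearPrimitiveRoot v q n) (hn : Odd n) {m k : ℕ} (hk : k ≤ m)
    {w : K} (hden : ∀ i < m, deformedFactor q n (4 * i + 4) w ≠ 0) :
    (1 + q ^ (4 * k + 1)) * deformedTerm q ((1 - q ^ n) ^ 2 * w) k *
        ∏ i ∈ range m, deformedFactor q n (4 * i + 4) w =
      clearedCoeff q n k * clearedProd (deformedFactor q n · w) m k := by
  have hp : (1 - q ^ n) ^ 3 ≠ 0 := pow_ne_zero 3 hq.one_sub_pow_self_ne_zero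
  have hne : ∏ i ∈ range k, deformedFactor q n (4 * i + 4) w ≠ 0 :=
    prod_ne_zero_iff.2 fun i hi => hden i ((mem_range.1 hi).trans_le hk)
  rw [deformedTerm, clearedCoeff, clearedProd, ← prod_range_mul_prod_Ico _ hk, prod_div_distrib,
    prod_div_distrib]
  simp only [cubicFactor_eq hq, prod_mul_distrib, prod_pow_eq_pow_sum]
  rw [sum_dvdIndicator_add_two hn, sum_dvdIndicator_add_four hn,
    pow_sub₀ _ hp (Nat.div_le_div_right (Nat.le_add_right k _))]
  field_simp

lemma deformedSum_mul_prod (hq : IsNearPrimitiveRoot v q n) (hn : Odd n) {m : ℕ} {w : K}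
    (hden : ∀ i < m, deformedFactor q n (4 * i + 4) w ≠ 0) :
    deformedSum q ((1 - q ^ n) ^ 2 * w) (m + 1) * ∏ i ∈ range m, deformedFactor q n (4 * i + 4) w =
      ∑ k ∈ range (m + 1), clearedCoeff q n k * clearedProd (deformedFactor q n · w) m k := by
  rw [deformedSum, sum_mul]
  exact sum_congr rfl fun k hk => clearedCoeff_mul hq hn (by rw [mem_range] at hk; omega) hden

lemma natDegree_clearedProd_le (hn : Odd n) {m k : ℕ} (hk : k ≤ m)
    (h : (k + n / 2) / n = k / n) :
    (clearedProd (truncatedFactor q n) m k).natDegree ≤ m / n := by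
  rw [← sum_dvdIndicator_add_four hn m, ← sum_range_add_sum_Ico _ hk,
    sum_dvdIndicator_add_four hn k, ← h, ← sum_dvdIndicator_add_two hn k]
  refine natDegree_mul_le_of_le ?_ ?_ <;>
    exact (natDegree_prod_le _ _).trans (sum_le_sum fun i _ => natDegree_truncatedFactor_le q n _)

lemma natDegree_truncatedSum_le (hn : Odd n) (q : K) (m : ℕ) :
    (truncatedSum q n m).natDegree ≤ m / n := by
  refine natDegree_sum_le_of_forall_le _ _ fun k hk => (natDegree_C_mul_le _ _).trans ?_
  obtain ⟨hk, hkn⟩ := mem_filter.1 hk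
  exact natDegree_clearedProd_le hn (by rw [mem_range] at hk; omega) hkn

lemma val_clearedCoeff_le (hq : IsNearPrimitiveRoot v q n) (k : ℕ) :
    v (clearedCoeff q n k) ≤ (v (1 - q ^ n) ^ 3) ^ ((k + n / 2) / n - k / n) := by
  have hunit : v (∏ i ∈ range k, unitPart q n (4 * i + 2) / unitPart q n (4 * i + 4)) = 1 := by
    rw [map_prod]
    refine prod_eq_one fun i _ => ?_
    rw [map_div₀, hq.val_unitPart (by omega), hq.val_unitPart (by omega), div_one]
  rw [clearedCoeff, map_mul, map_mul, map_mul, hunit, hq.val_pow, mul_one, mul_one, map_pow,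
    map_pow]
  exact mul_le_of_le_one_left' (hq.val_one_add_pow_le_one _)

lemma val_clearedProd_le_one {f : ℕ → K} (hf : ∀ e ≠ 0, v (f e) ≤ 1) (m k : ℕ) :
    v (clearedProd f m k) ≤ 1 := by
  rw [clearedProd, map_mul]
  exact mul_le_one' (val_prod_le_one v fun i _ => hf _ (by omega))
    (val_prod_le_one v fun i _ => hf _ (by omega))

lemma val_clearedProd_sub_le {g : Γ} {f f' : ℕ → K} (hf : ∀ e ≠ 0, v (f e) ≤ 1)
    (hf' : ∀ e ≠ 0, v (f' e) ≤ 1) (h : ∀ e, v (f e - f' e) ≤ g) (m k : ℕ) :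
    v (clearedProd f m k - clearedProd f' m k) ≤ g := by
  have hprod (s : Finset ℕ) (d : ℕ) (hd : d ≠ 0) :
      v (∏ i ∈ s, f (4 * i + d) - ∏ i ∈ s, f' (4 * i + d)) ≤ g :=
    val_prod_sub_prod_le v (fun i _ => hf _ (by omega)) (fun i _ => hf' _ (by omega))
      fun i _ => h _
  exact val_mul_sub_mul_le v (val_prod_le_one v fun i _ => hf _ (by omega))
    (val_prod_le_one v fun i _ => hf' _ (by omega)) (hprod _ 2 two_ne_zero)
    (hprod _ 4 four_ne_zero)

lemma eval_truncatedSum (q : K) (n m : ℕ) (w : K) :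
    (truncatedSum q n m).eval w = ∑ k ∈ range (m + 1), if (k + n / 2) / n = k / n then
      clearedCoeff q n k * clearedProd (fun e => (truncatedFactor q n e).eval w) m k else 0 := by
  rw [← sum_filter]
  simp only [truncatedSum, eval_finsetSum, eval_mul, eval_C, clearedProd, eval_prod]

lemma val_deformedSum_mul_prod_sub_eval_le (hq : IsNearPrimitiveRoot v q n) (hn : Odd n) {m : ℕ}
    {w : K} (hw : v w ≤ 1) (hden : ∀ i < m, deformedFactor q n (4 * i + 4) w ≠ 0) :
    v (deformedSum q ((1 - q ^ n) ^ 2 * w) (m + 1) *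
        ∏ i ∈ range m, deformedFactor q n (4 * i + 4) w - (truncatedSum q n m).eval w) ≤
      v (1 - q ^ n) ^ 2 := by
  have hp : v (1 - q ^ n) ≤ 1 := hq.val_one_sub_pow_self_lt_one.le
  have hfactor (e : ℕ) (he : e ≠ 0) := val_deformedFactor_le_one hq he hw
  rw [deformedSum_mul_prod hq hn hden, eval_truncatedSum, ← sum_sub_distrib]
  refine v.map_sum_le fun k _ => ?_
  have hcoeff := val_clearedCoeff_le hq k
  split_ifs with hk
  · rw [hk, Nat.sub_self, pow_zero] at hcoeff
    rw [← mul_sub, map_mul]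
    exact mul_le_of_le_one_of_le hcoeff <| val_clearedProd_sub_le hfactor
      (fun e he => val_eval_truncatedFactor_le_one hq he hw)
      (fun e => val_deformedFactor_sub_eval_truncatedFactor_le hq e hw) m k
  · have hlt : k / n < (k + n / 2) / n :=
      (Nat.div_le_div_right (Nat.le_add_right k _)).lt_of_ne' hk
    rw [sub_zero, map_mul]
    refine mul_le_of_le_of_le_one (hcoeff.trans ?_) (val_clearedProd_le_one hfactor m k)
    rw [← pow_mul]
    exact pow_le_pow_right_of_le_one' hp (by omega)

end ClearedSum

section Nodes

/-- The value of the rescaled parameter at `b = q ^ (n c)`, which is close to `c²`. -/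
def node (q : K) (n c : ℕ) : K := deformParam (q ^ (n * c)) / (1 - q ^ n) ^ 2

lemma sq_mul_node (hq : IsNearPrimitiveRoot v q n) (c : ℕ) :
    (1 - q ^ n) ^ 2 * node q n c = deformParam (q ^ (n * c)) :=
  mul_div_cancel₀ _ (pow_ne_zero 2 hq.one_sub_pow_self_ne_zero)

lemma node_eq (hq : IsNearPrimitiveRoot v q n) (c : ℕ) :
    node q n c = (∑ i ∈ range c, (q ^ n) ^ i) ^ 2 / q ^ (n * c) := by
  have hp := hq.one_sub_pow_self_ne_zero
  have hq₀ := hq.ne_zero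
  rw [node, deformParam, ← neg_sq, neg_sub, pow_mul, ← mul_neg_geom_sum]
  field_simp

lemma val_node_sub_sq_lt_one (hq : IsNearPrimitiveRoot v q n) {c : ℕ} (hc : c ≠ 0) :
    v (node q n c - c ^ 2) < 1 := by
  set a := ∑ i ∈ range c, (q ^ n) ^ i
  have hac : v (a - c) < 1 := val_geom_sum_sub_natCast_lt v hq.val_one_sub_pow_self_lt_one c
  have ha : v (a + c) ≤ 1 := by
    refine v.map_add_le (v.map_sum_le fun i _ => ?_) (hq.val_natCast c hc).le
    rw [← pow_mul, hq.val_pow]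
  have hb : v (1 - q ^ (n * c)) < 1 := by
    rw [hq.val_one_sub_pow (mul_ne_zero hq.order_ne_zero hc), dvdIndicator,
      if_pos (dvd_mul_right n c), pow_one]
    exact hq.val_one_sub_pow_self_lt_one
  rw [node_eq hq, div_sub' (pow_ne_zero _ hq.ne_zero), map_div₀, hq.val_pow, div_one,
    show a ^ 2 - q ^ (n * c) * c ^ 2 = (a - c) * (a + c) + (1 - q ^ (n * c)) * c ^ 2 by ring]
  refine v.map_add_lt ?_ ?_ <;> rw [map_mul]
  · exact mul_lt_of_lt_of_le_one hac ha
  · rwa [map_pow, hq.val_natCast c hc, one_pow, mul_one]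

lemma val_node (hq : IsNearPrimitiveRoot v q n) {c : ℕ} (hc : c ≠ 0) : v (node q n c) = 1 := by
  have hsq : v ((c : K) ^ 2) = 1 := by rw [map_pow, hq.val_natCast c hc, one_pow]
  rw [← hsq]
  exact v.map_eq_of_sub_lt ((val_node_sub_sq_lt_one hq hc).trans_eq hsq.symm)

lemma val_node_sub_node (hq : IsNearPrimitiveRoot v q n) {c d : ℕ} (hc : c ≠ 0) (hd : d ≠ 0)
    (hcd : c ≠ d) : v (node q n c - node q n d) = 1 := by
  have hsq : v ((c : K) ^ 2 - d ^ 2) = 1 := by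
    exact_mod_cast hq.val_natCast_sub_natCast fun h => hcd (Nat.pow_left_injective two_ne_zero h)
  rw [← hsq]
  refine v.map_eq_of_sub_lt ?_
  rw [sub_sub_sub_comm, hsq]
  exact v.map_sub_lt (val_node_sub_sq_lt_one hq hc) (val_node_sub_sq_lt_one hq hd)

lemma mul_four_mul_add_two (hn : Odd n) (j : ℕ) :
    n * (4 * j + 2) = 4 * (n * j + n / 2) + 2 := by
  obtain ⟨t, rfl⟩ := hn
  rw [show (2 * t + 1) / 2 = t by omega]
  ring

lemma deformedFactor_node_ne_zero (hq : IsNearPrimitiveRoot v q n) (hn : Odd n) (i j : ℕ) :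
    deformedFactor q n (4 * i + 4) (node q n (4 * j + 2)) ≠ 0 := by
  have hpow (e : ℕ) : q ^ e ≠ 0 := pow_ne_zero e hq.ne_zero
  have hsub := hq.one_sub_pow_ne_zero
  have hfactor : cubicFactor (q ^ (4 * i + 4)) (deformParam (q ^ (n * (4 * j + 2)))) ≠ 0 := by
    rw [mul_four_mul_add_two hn, cubicFactor_deformParam (hpow _), ← pow_add]
    exact div_ne_zero (mul_ne_zero (mul_ne_zero (hsub _ (by omega)) (hsub _ (by omega)))
      (pow_sub_pow_ne_zero hsub hq.ne_zero (by omega))) (hpow _)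
  rw [← sq_mul_node hq, cubicFactor_eq hq] at hfactor
  exact right_ne_zero_of_mul (right_ne_zero_of_mul hfactor)

end Nodes

section ClosedFormValuation

lemma val_closedForm (hq : IsNearPrimitiveRoot v q n) (M : ℕ) :
    v (closedForm q M) =
      v (1 - q ^ n) ^ (dvdIndicator n (4 * M + 2) + ∑ i ∈ range M, dvdIndicator n (4 * i + 3)) /
        v (1 - q ^ n) ^ (dvdIndicator n 2 + ∑ i ∈ range M, dvdIndicator n (4 * i + 5)) := by
  rw [closedForm, map_div₀, map_mul, map_div₀, hq.val_one_sub_pow (by omega),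
    hq.val_one_sub_pow two_ne_zero, hq.val_pow, div_one, prod_div_distrib, map_div₀, map_prod,
    map_prod, prod_congr rfl fun i _ => hq.val_one_sub_pow (show 4 * i + 3 ≠ 0 by omega),
    prod_congr rfl fun i _ => hq.val_one_sub_pow (show 4 * i + 5 ≠ 0 by omega),
    prod_pow_eq_pow_sum, prod_pow_eq_pow_sum, div_mul_div_comm, pow_add, pow_add]

lemma val_closedForm_of_mod_four (hq : IsNearPrimitiveRoot v q n) (hn : n % 4 = 3) (j : ℕ) :
    v (closedForm q (n * j + n / 2)) = v (1 - q ^ n) ^ 2 := by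
  have hodd : Odd n := Nat.odd_iff.2 (by omega)
  have hp : v (1 - q ^ n) ≠ 0 := v.ne_zero_iff.2 hq.one_sub_pow_self_ne_zero
  have hdvd : n ∣ 4 * (n * j + n / 2) + 2 := ⟨4 * j + 2, (mul_four_mul_add_two hodd j).symm⟩
  have hndvd : ¬n ∣ 2 := Nat.not_dvd_of_pos_of_lt two_pos (by omega)
  have hnum : (n * j + n / 2 + 3 * n / 4) / n = j + 1 :=
    Nat.div_eq_of_lt_le (by linarith [show n ≤ n / 2 + 3 * n / 4 by omega])
      (by linarith [show n / 2 + 3 * n / 4 < 2 * n by omega])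
  have hden : (n * j + n / 2 + (n + 1) / 4) / n = j :=
    Nat.div_eq_of_lt_le (by linarith [Nat.zero_le (n / 2 + (n + 1) / 4)])
      (by linarith [show n / 2 + (n + 1) / 4 < n by omega])
  rw [val_closedForm hq, sum_dvdIndicator (s := 3 * n / 4) (c := 3) hodd (by omega) (by omega),
    sum_dvdIndicator (s := (n + 1) / 4) (c := 1) hodd (by omega) (by omega), hnum, hden,
    dvdIndicator, if_pos hdvd, dvdIndicator, if_neg hndvd, zero_add,
    show 1 + (j + 1) = 2 + j by ring, pow_add, mul_div_cancel_right₀ _ (pow_ne_zero j hp)]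

end ClosedFormValuation

section Interpolation

lemma deformedFactor_zero_right (q : K) (n e : ℕ) :
    deformedFactor q n e 0 = unitPart q n e ^ 2 := by
  rw [deformedFactor, mul_zero, sub_zero]

lemma val_eval_truncatedSum_node_le (hq : IsNearPrimitiveRoot v q n) (hn : n % 4 = 3) {r m j : ℕ}
    (hm : n * r = m + 1) (hj : j < r) :
    v ((truncatedSum q n m).eval (node q n (4 * j + 2))) ≤ v (1 - q ^ n) ^ 2 := by
  have hodd : Odd n := Nat.odd_iff.2 (by omega)
  have hw : v (node q n (4 * j + 2)) ≤ 1 := (val_node hq (by omega)).le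
  have hden (i : ℕ) (_ : i < m) := deformedFactor_node_ne_zero hq hodd i j
  have hM : n * j + n / 2 < m + 1 := by
    have : n * (j + 1) ≤ n * r := Nat.mul_le_mul_left n hj
    rw [mul_add_one] at this
    omega
  have hsum : v (deformedSum q ((1 - q ^ n) ^ 2 * node q n (4 * j + 2)) (m + 1)) ≤
      v (1 - q ^ n) ^ 2 := by
    rw [sq_mul_node hq, mul_four_mul_add_two hodd,
      deformedSum_eq_closedForm hq.one_sub_pow_ne_zero hq.ne_zero hM, map_mul,
      val_closedForm_of_mod_four hq hn]
    exact mul_le_of_le_one_left' (by simpa using hq.val_one_add_pow_le_one 1)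
  have hprod : v (∏ i ∈ range m, deformedFactor q n (4 * i + 4) (node q n (4 * j + 2))) ≤ 1 :=
    val_prod_le_one v fun i _ => val_deformedFactor_le_one hq (by omega) hw
  rw [← sub_sub_cancel (_ * ∏ i ∈ range m, _) (eval _ _)]
  refine v.map_sub_le ?_ (val_deformedSum_mul_prod_sub_eval_le hq hodd hw hden)
  rw [map_mul]
  exact mul_le_of_le_of_le_one hsum hprod

theorem val_deformedSum_zero_le (hq : IsNearPrimitiveRoot v q n) (hn : n % 4 = 3) {r : ℕ}
    (hr : r ≠ 0) : v (deformedSum q 0 (n * r)) ≤ v (1 - q ^ n) ^ 2 := by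
  have hodd : Odd n := Nat.odd_iff.2 (by omega)
  have hn₀ : n ≠ 0 := by omega
  obtain ⟨m, hm⟩ := Nat.exists_eq_add_one_of_ne_zero (mul_ne_zero hn₀ hr)
  have hunit (i : ℕ) : v (deformedFactor q n (4 * i + 4) 0) = 1 := by
    rw [deformedFactor_zero_right, map_pow, hq.val_unitPart (by omega), one_pow]
  have hdeg : (truncatedSum q n m).degree < #(range r) := by
    rw [card_range]
    refine degree_le_natDegree.trans_lt (Nat.cast_lt.2 ?_)
    exact (natDegree_truncatedSum_le hodd q m).trans_lt (Nat.div_lt_of_lt_mul (by omega))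
  have heval : v ((truncatedSum q n m).eval 0) ≤ v (1 - q ^ n) ^ 2 :=
    val_eval_le_of_nodes v (w := fun j => node q n (4 * j + 2)) hdeg
      (fun j _ => (val_node hq (by omega)).le)
      (fun i _ j _ hij => val_node_sub_node hq (by omega) (by omega) (by omega))
      (fun j hj => val_eval_truncatedSum_node_le hq hn hm (mem_range.1 hj)) (by simp)
  have hclose := val_deformedSum_mul_prod_sub_eval_le hq hodd (m := m) (w := 0) (by simp)
    fun i _ => v.ne_zero_iff.1 (hunit i ▸ one_ne_zero)
  have hmul := v.map_add_le hclose heval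
  rwa [sub_add_cancel, map_mul, map_prod, prod_eq_one fun i _ => hunit i, mul_one, mul_zero,
    ← hm] at hmul

theorem val_deformedSum_zero_sub_closedForm_le_of_dvd (hq : IsNearPrimitiveRoot v q n)
    (hn : n % 4 = 3) {M : ℕ} (hM : n ∣ 2 * M + 1) :
    v (deformedSum q 0 (2 * M + 1) - (1 + q) * closedForm q M) ≤ v (1 - q ^ n) ^ 2 := by
  obtain ⟨r, hr⟩ := hM
  obtain ⟨-, j, rfl⟩ := Nat.odd_mul.1 (hr ▸ odd_two_mul_add_one M)
  have hMj : M = n * j + n / 2 := by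
    rw [mul_add, mul_left_comm] at hr
    omega
  rw [hr]
  refine v.map_sub_le (val_deformedSum_zero_le hq hn (by omega)) ?_
  rw [map_mul, hMj, val_closedForm_of_mod_four hq hn]
  exact mul_le_of_le_one_left' (by simpa using hq.val_one_add_pow_le_one 1)

end Interpolation

end ProperMultiple

section PrimeValuation

open WithZero IsDedekindDomain

variable {R : Type*} [CommRing R] [IsDedekindDomain R] {π : R} (hπ : Prime π)
  (K : Type*) [Field K] [Algebra R K] [IsFractionRing R K]

/-- The `π`-adic valuation on the fraction field of a Dedekind domain. -/
noncomputable def primeValuation : Valuation K ℤᵐ⁰ :=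
  (HeightOneSpectrum.ofPrime (Ideal.prime_span_singleton_iff.2 hπ)).valuation K

lemma primeValuation_algebraMap_lt_one_iff {a : R} :
    primeValuation hπ K (algebraMap R K a) < 1 ↔ π ∣ a :=
  (HeightOneSpectrum.valuation_lt_one_iff_mem _ _).trans Ideal.mem_span_singleton

lemma primeValuation_algebraMap_eq_one {a : R} (ha : ¬π ∣ a) :
    primeValuation hπ K (algebraMap R K a) = 1 :=
  (HeightOneSpectrum.valuation_eq_one_iff_notMem _).2 (mt Ideal.mem_span_singleton.1 ha)

lemma primeValuation_algebraMap_le_pow_iff {a : R} {k : ℕ} :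
    primeValuation hπ K (algebraMap R K a) ≤ primeValuation hπ K (algebraMap R K π) ^ k ↔
      π ^ k ∣ a := by
  have hπ_val := HeightOneSpectrum.intValuation_singleton
    (HeightOneSpectrum.ofPrime (Ideal.prime_span_singleton_iff.2 hπ)) hπ.ne_zero rfl
  rw [primeValuation, HeightOneSpectrum.valuation_of_algebraMap,
    HeightOneSpectrum.valuation_of_algebraMap, hπ_val, ← exp_nsmul, nsmul_eq_mul, mul_neg_one,
    HeightOneSpectrum.intValuation_le_pow_iff_mem]
  change a ∈ Ideal.span {π} ^ k ↔ _
  rw [Ideal.span_singleton_pow, Ideal.mem_span_singleton]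

lemma primeValuation_algebraMap_le_of_dvd {a : R} (ha : π ∣ a) :
    primeValuation hπ K (algebraMap R K a) ≤ primeValuation hπ K (algebraMap R K π) := by
  simpa using (primeValuation_algebraMap_le_pow_iff hπ K (k := 1)).2 (by simpa using ha)

end PrimeValuation

section RationalFunctions

variable {F : Type*} [Field F]

lemma mul_algebraMap_denom (x : RatFunc F) :
    x * algebraMap F[X] (RatFunc F) x.denom = algebraMap F[X] (RatFunc F) x.num := by
  rw [← eq_div_iff (RatFunc.algebraMap_ne_zero x.denom_ne_zero), RatFunc.num_div_denom]

lemma pow_dvd_num {π : F[X]} (hπ : Prime π) {x : RatFunc F} {k : ℕ}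
    (hx : primeValuation hπ (RatFunc F) x ≤
      primeValuation hπ (RatFunc F) (algebraMap F[X] (RatFunc F) π) ^ k) : π ^ k ∣ x.num := by
  rw [← primeValuation_algebraMap_le_pow_iff hπ (RatFunc F), ← mul_algebraMap_denom, map_mul]
  exact mul_le_of_le_of_le_one hx
    (IsDedekindDomain.HeightOneSpectrum.valuation_le_one _ x.denom)

lemma not_dvd_denom {π : F[X]} (hπ : Prime π) {x : RatFunc F} (hx : π ∣ x.num) : ¬π ∣ x.denom :=
  fun h => hπ.not_isUnit (x.isCoprime_num_denom.isUnit_of_dvd' hx h)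

end RationalFunctions

section CyclotomicPlace

lemma cyclotomic_dvd_one_sub_X_pow_iff {m : ℕ} (hm : 0 < m) {e : ℕ} :
    cyclotomic m ℚ ∣ 1 - X ^ e ↔ m ∣ e := by
  have hζ := Complex.isPrimitiveRoot_exp m hm.ne'
  rw [cyclotomic_eq_minpoly_rat hζ hm, minpoly.dvd_iff, ← hζ.pow_eq_one_iff_dvd]
  rw [map_sub, map_one, map_pow, aeval_X, sub_eq_zero, eq_comm]

/-- The `Φ_m`-adic valuation on `ℚ(q)`. -/
noncomputable abbrev cyclotomicValuation (m : ℕ) (hm : 0 < m) :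
    Valuation (RatFunc ℚ) (WithZero (Multiplicative ℤ)) :=
  primeValuation (cyclotomic.irreducible_rat hm).prime (RatFunc ℚ)

lemma algebraMap_one_sub_X_pow (e : ℕ) :
    algebraMap ℚ[X] (RatFunc ℚ) (1 - X ^ e) = 1 - Q ^ e := by
  simp [Q]

lemma isNearPrimitiveRoot_Q {m : ℕ} (hm : 0 < m) :
    IsNearPrimitiveRoot (cyclotomicValuation m hm) Q m where
  one_sub_pow_self_ne_zero := by
    rw [← algebraMap_one_sub_X_pow]
    refine RatFunc.algebraMap_ne_zero (sub_ne_zero.2 fun h => ?_)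
    simpa [hm.ne] using congrArg natDegree h
  val_one_sub_pow_self_lt_one := by
    rw [← algebraMap_one_sub_X_pow, primeValuation_algebraMap_lt_one_iff,
      cyclotomic_dvd_one_sub_X_pow_iff hm]
  val_one_sub_pow_of_not_dvd e he := by
    rw [← algebraMap_one_sub_X_pow]
    exact primeValuation_algebraMap_eq_one _ _ (mt (cyclotomic_dvd_one_sub_X_pow_iff hm).1 he)
  val_natCast c hc := by
    rw [← map_natCast (algebraMap ℚ[X] (RatFunc ℚ))]
    refine primeValuation_algebraMap_eq_one _ _ fun h => ?_
    have hunit : IsUnit (c : ℚ[X]) := by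
      rw [← map_natCast C, isUnit_C]
      exact (Nat.cast_ne_zero.2 hc).isUnit
    exact (cyclotomic.irreducible_rat hm).not_isUnit (isUnit_of_dvd_unit h hunit)

lemma cyclotomic_sq_dvd_num {m : ℕ} (hm : 2 < m) {a b : RatFunc ℚ}
    (h : cyclotomicValuation m (by omega) (a - (1 + Q) * b) ≤
      cyclotomicValuation m (by omega) (1 - Q ^ m) ^ 2) :
    cyclotomic m ℚ ^ 2 ∣ (a / (1 + Q) - b).num := by
  have hm₀ : 0 < m := by omega
  have hQ := (isNearPrimitiveRoot_Q hm₀).val_one_add (Nat.not_dvd_of_pos_of_lt two_pos hm)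
  have hQ₀ : 1 + Q ≠ 0 := (Valuation.ne_zero_iff _).1 (hQ.trans_ne one_ne_zero)
  refine pow_dvd_num (cyclotomic.irreducible_rat hm₀).prime ?_
  rw [div_sub' hQ₀, map_div₀, hQ, div_one]
  refine h.trans (pow_le_pow_left' ?_ 2)
  rw [← algebraMap_one_sub_X_pow]
  exact primeValuation_algebraMap_le_of_dvd _ _ ((cyclotomic_dvd_one_sub_X_pow_iff hm₀).2 dvd_rfl)

end CyclotomicPlace

section Congruence

lemma qPoch_Q_pow (d k : ℕ) :
    qPoch (Q ^ d) (Q ^ 4) k = ∏ i ∈ range k, (1 - Q ^ (4 * i + d)) := by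
  simp only [qPoch, ← pow_mul, ← pow_add, add_comm d]

lemma sum_eq_deformedSum_div (N : ℕ) :
    ∑ k ∈ range N, (1 + Q ^ (4 * k + 1)) * qPoch (Q ^ 2) (Q ^ 4) k ^ 3 * Q ^ k /
        ((1 + Q) * qPoch (Q ^ 4) (Q ^ 4) k ^ 3) = deformedSum Q 0 N / (1 + Q) := by
  rw [deformedSum, sum_div]
  refine sum_congr rfl fun k _ => ?_
  simp only [deformedTerm, cubicFactor_zero_right, qPoch_Q_pow, prod_div_distrib, prod_pow]
  rw [mul_comm (1 + Q) (_ ^ 3), ← div_div]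
  ring

lemma closedForm_Q_eq (M : ℕ) :
    (∑ i ∈ range (2 * M + 1), Q ^ (2 * i)) * qPoch (Q ^ 3) (Q ^ 4) M / qPoch (Q ^ 5) (Q ^ 4) M *
      (Q ^ M)⁻¹ = closedForm Q M := by
  have h₂ : 1 - Q ^ 2 ≠ 0 := (isNearPrimitiveRoot_Q one_pos).one_sub_pow_ne_zero 2 two_ne_zero
  have hgeom : ∑ i ∈ range (2 * M + 1), Q ^ (2 * i) = (1 - Q ^ (4 * M + 2)) / (1 - Q ^ 2) := by
    rw [eq_div_iff h₂, show 4 * M + 2 = 2 * (2 * M + 1) by ring, pow_mul Q 2,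
      ← geom_sum_mul_neg (Q ^ 2)]
    simp only [pow_mul]
  rw [hgeom, closedForm, qPoch_Q_pow, qPoch_Q_pow, prod_div_distrib, mul_div_assoc,
    ← div_eq_mul_inv]

end Congruence

theorem stmt6_general (n N : ℕ) (hn : n % 4 = 3) (hN : Odd N) (hdvd : n ∣ N) (hne : n ≠ N) :
    ∃ a b : ℚ[X], ¬cyclotomic n ℚ ∣ b ∧ ¬cyclotomic N ℚ ∣ b ∧
      ((∑ k ∈ range N, (1 + Q ^ (4 * k + 1)) * qPoch (Q ^ 2) (Q ^ 4) k ^ 3 * Q ^ k /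
            ((1 + Q) * qPoch (Q ^ 4) (Q ^ 4) k ^ 3)) -
          (∑ i ∈ range N, Q ^ (2 * i)) * qPoch (Q ^ 3) (Q ^ 4) ((N - 1) / 2) /
            qPoch (Q ^ 5) (Q ^ 4) ((N - 1) / 2) * (Q ^ ((N - 1) / 2))⁻¹) *
          algebraMap ℚ[X] (RatFunc ℚ) b =
        algebraMap ℚ[X] (RatFunc ℚ) (cyclotomic n ℚ ^ 2 * cyclotomic N ℚ ^ 2 * a) := by
  obtain ⟨M, rfl⟩ := hN
  have hn₂ : 2 < n := by omega
  have hN₂ : 2 < 2 * M + 1 := hn₂.trans_le (Nat.le_of_dvd (by omega) hdvd)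
  rw [show (2 * M + 1 - 1) / 2 = M by omega, sum_eq_deformedSum_div, closedForm_Q_eq]
  set x := deformedSum Q 0 (2 * M + 1) / (1 + Q) - closedForm Q M
  have hn_dvd : cyclotomic n ℚ ^ 2 ∣ x.num := cyclotomic_sq_dvd_num hn₂ <|
    val_deformedSum_zero_sub_closedForm_le_of_dvd (isNearPrimitiveRoot_Q _) hn hdvd
  have hN_dvd : cyclotomic (2 * M + 1) ℚ ^ 2 ∣ x.num := cyclotomic_sq_dvd_num hN₂ <|
    val_deformedSum_zero_sub_closedForm_le (isNearPrimitiveRoot_Q _)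
  obtain ⟨a, ha⟩ := (cyclotomic.isCoprime_rat hne).pow.mul_dvd hn_dvd hN_dvd
  have hprime {m : ℕ} (hm : 2 < m) := (cyclotomic.irreducible_rat (pos_of_gt hm)).prime
  exact ⟨a, x.denom, not_dvd_denom (hprime hn₂) ((dvd_pow_self _ two_ne_zero).trans hn_dvd),
    not_dvd_denom (hprime hN₂) ((dvd_pow_self _ two_ne_zero).trans hN_dvd),
    by rw [mul_algebraMap_denom, ha]⟩

/-- For `n ≡ 3 (mod 4)` positive, modulo `Φ_n(q)^2 Φ_{n^2}(q)^2`: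
`∑_{k=0}^{n^2-1} (1+q^{4k+1})(q^2;q^4)_k^3 q^k / ((1+q)(q^4;q^4)_k^3)
 ≡ [n^2]_{q^2} (q^3;q^4)_{(n^2-1)/2} / (q^5;q^4)_{(n^2-1)/2} · q^{(1-n^2)/2}`. -/
theorem stmt6 (n : ℕ) (hn : 0 < n) (h : n % 4 = 3) :
    ∃ a b : Polynomial ℚ, ¬ (Polynomial.cyclotomic n ℚ ∣ b) ∧
      ¬ (Polynomial.cyclotomic (n ^ 2) ℚ ∣ b) ∧
      ((∑ k ∈ Finset.range (n ^ 2),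
          (1 + Q ^ (4 * k + 1)) * qPoch (Q ^ 2) (Q ^ 4) k ^ 3 * Q ^ k /
            ((1 + Q) * qPoch (Q ^ 4) (Q ^ 4) k ^ 3))
        - (∑ i ∈ Finset.range (n ^ 2), Q ^ (2 * i))
            * qPoch (Q ^ 3) (Q ^ 4) ((n ^ 2 - 1) / 2)
            / qPoch (Q ^ 5) (Q ^ 4) ((n ^ 2 - 1) / 2)
            * (Q ^ ((n ^ 2 - 1) / 2))⁻¹)
        * algebraMap (Polynomial ℚ) (RatFunc ℚ) b
      = algebraMap (Polynomial ℚ) (RatFunc ℚ)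
          (Polynomial.cyclotomic n ℚ ^ 2 * Polynomial.cyclotomic (n ^ 2) ℚ ^ 2 * a) :=
  stmt6_general n (n ^ 2) h (Nat.odd_iff.2 (by omega)).pow (dvd_pow_self n two_ne_zero)
    (lt_self_pow₀ (by omega) one_lt_two).ne
end

section
/- Let p ≡ 3 (mod 4) be a prime. Then the sum over k from 0 to (p^2-1)/2 of ((1/2)_k)^3/(k!)^3 is congruent to p^2 · (3/4)_{(p^2-1)/2} / (5/4)_{(p^2-1)/2} modulo p^4, i.e., the difference of these two rational numbers has p-adic valuation at least 4. -/
open Finset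

/-- The rising factorial (Pochhammer symbol) `(a)_k = a(a+1)⋯(a+k-1)` for `a : ℚ`. -/
def risingFactorial (a : ℚ) (k : ℕ) : ℚ := ∏ i ∈ Finset.range k, (a + i)

/-!
Write `c k = (1/2)_k / k!` and `p ^ 2 = 4 * n + 1`. Whipple's `₃F₂` summation gives
`∑_{k ≤ 2n} c k ^ 3 * ∏_{i < k} (1 - (p ^ 2 / (2 * i + 1)) ^ 2) = c n ^ 2`. The products may be
replaced by `1` modulo `p ^ 4`: the terms linear in `(p ^ 2 / (2 * i + 1)) ^ 2` are divisible by
`p ^ 2` and constant modulo `p ^ 4` along the first half of each block `p * q ≤ k < p * (q + 1)`,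
the cubes `c k ^ 3` of that half sum to `0` modulo `p ^ 2`, and `p ∣ c k` on the second half.

The half-block sum vanishes because shifting the three parameters of `(s)_k ^ 3` by multiples of `p`
with sum zero does not change it modulo `p ^ 2`, and a suitable shift of numerator and denominator
is summed by Dixon's theorem, with a value containing two multiples of `p`. Finally,
`p ^ 2 * (3/4)_{2n} / (5/4)_{2n}` is `c n ^ 2` times a number that is `1` modulo `p ^ 2`, and
`p ∣ c n`.

Congruences are stated for the multiplicative valuation: `ν p x ≤ ν p p ^ r` means that `x` lies in
`p ^ r ℤ_(p)`.
-/

open scoped Nat WithZero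

section RisingFactorial

variable (a : ℚ)

lemma risingFactorial_zero : risingFactorial a 0 = 1 := prod_range_zero _

lemma risingFactorial_succ (k : ℕ) : risingFactorial a (k + 1) = risingFactorial a k * (a + k) :=
  prod_range_succ _ _

lemma risingFactorial_add (m n : ℕ) :
    risingFactorial a (m + n) = risingFactorial a m * risingFactorial (a + m) n := by
  simp only [risingFactorial, prod_range_add, Nat.cast_add, add_assoc]

lemma risingFactorial_succ_left (k : ℕ) :
    risingFactorial a (k + 1) = a * risingFactorial (a + 1) k := by
  rw [add_comm, risingFactorial_add, risingFactorial_succ, risingFactorial_zero, one_mul,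
    Nat.cast_zero, add_zero, Nat.cast_one]

lemma risingFactorial_one_left (k : ℕ) : risingFactorial 1 k = k ! := by
  simp only [risingFactorial, ← prod_range_add_one_eq_factorial, Nat.cast_prod, Nat.cast_add,
    Nat.cast_one, add_comm]

variable {a} in
lemma risingFactorial_ne_zero (ha : ∀ i : ℕ, a + i ≠ 0) (k : ℕ) : risingFactorial a k ≠ 0 :=
  prod_ne_zero_iff.mpr fun i _ ↦ ha i

lemma risingFactorial_neg_natCast {m k : ℕ} (h : m < k) : risingFactorial (-m) k = 0 :=
  prod_eq_zero (mem_range.mpr h) (neg_add_cancel _)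

lemma risingFactorial_reflect (n : ℕ) :
    risingFactorial a n = (-1) ^ n * risingFactorial (1 - a - n) n := by
  rw [← card_range n, ← prod_const, card_range]
  simp only [risingFactorial]
  rw [← prod_range_reflect, ← prod_mul_distrib]
  refine prod_congr rfl fun i hi ↦ ?_
  have hi' : i + 1 ≤ n := mem_range.mp hi
  rw [Nat.sub_sub, add_comm 1 i, Nat.cast_sub hi']
  push_cast
  ring

lemma risingFactorial_sub_mul_add {s : ℚ} (hs : ∀ i : ℕ, s + i ≠ 0) (y : ℚ) (n : ℕ) :
    risingFactorial (s - y) n * risingFactorial (s + y) n =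
      risingFactorial s n ^ 2 * ∏ i ∈ range n, (1 - (y / (s + i)) ^ 2) := by
  simp only [risingFactorial, ← prod_pow, ← prod_mul_distrib]
  refine prod_congr rfl fun i _ ↦ ?_
  have := hs i
  field_simp
  ring

end RisingFactorial

section Hypergeometric

/-- The `k`-th term of the hypergeometric series `₃F₂(a, b, c; d, e)` at the argument `1`. -/
def hypTerm (a b c d e : ℚ) (k : ℕ) : ℚ :=
  risingFactorial a k * risingFactorial b k * risingFactorial c k /
    (k ! * risingFactorial d k * risingFactorial e k)

lemma sum_range_hypTerm {m n : ℕ} (h : m + 1 ≤ n) (a c d e : ℚ) :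
    ∑ k ∈ range n, hypTerm a (-m) c d e k = ∑ k ∈ range (m + 1), hypTerm a (-m) c d e k :=
  eventually_constant_sum
    (fun k hk ↦ by rw [hypTerm, risingFactorial_neg_natCast hk, mul_zero, zero_mul, zero_div]) h

-- Zeilberger's recurrence in `m`: the right-hand side is the telescoped certificate, which vanishes
-- as soon as `m < n`.
lemma sum_hypTerm_dixon_sub {a c : ℚ} (hd : ∀ i : ℕ, 1 + a + i ≠ 0)
    (he : ∀ i : ℕ, 1 + a - c + i ≠ 0) (m n : ℕ) :
    ∑ k ∈ range (n + 1),
        ((1 + a / 2 + m) * (1 + a - c + m) *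
            hypTerm a (-(m + 1 : ℕ)) c (1 + a + (m + 1 : ℕ)) (1 + a - c) k -
          (1 + a + m) * (1 + a / 2 - c + m) * hypTerm a (-m) c (1 + a + m) (1 + a - c) k) =
      risingFactorial a (n + 1) * risingFactorial (-m) n * risingFactorial c (n + 1) /
        (2 * (n ! * risingFactorial (2 + a + m) n * risingFactorial (1 + a - c) n)) := by
  have hd' (i : ℕ) : 2 + a + m + i ≠ 0 := by
    convert hd (m + 1 + i) using 1
    push_cast
    ring
  induction n with
  | zero => simp [hypTerm, risingFactorial_zero, risingFactorial_succ]; ring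
  | succ n ih =>
    have hb : risingFactorial (-(m + 1 : ℕ)) (n + 1) = -(m + 1) * risingFactorial (-m) n := by
      rw [risingFactorial_succ_left]
      push_cast
      ring_nf
    have hd₀ : risingFactorial (1 + a + m) (n + 1) =
        (1 + a + m) * risingFactorial (2 + a + m) n := by
      rw [risingFactorial_succ_left]
      ring_nf
    have hd₁ : risingFactorial (1 + a + (m + 1 : ℕ)) (n + 1) =
        risingFactorial (2 + a + m) n * (2 + a + m + n) := by
      rw [risingFactorial_succ]
      push_cast
      ring_nf
    have := risingFactorial_ne_zero hd' n
    have := risingFactorial_ne_zero he n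
    have := hd m
    have := hd' n
    have := he n
    rw [sum_range_succ, ih, hypTerm, hypTerm, hb, hd₀, hd₁, Nat.factorial_succ]
    simp only [risingFactorial_succ _ (n + 1), risingFactorial_succ (-m : ℚ) n,
      risingFactorial_succ (1 + a - c) n, risingFactorial_succ (2 + a + m) n]
    push_cast
    field_simp
    ring

theorem sum_hypTerm_dixon {a c : ℚ} (hd : ∀ i : ℕ, 1 + a + i ≠ 0)
    (he : ∀ i : ℕ, 1 + a - c + i ≠ 0) (m : ℕ) :
    (∑ k ∈ range (m + 1), hypTerm a (-m) c (1 + a + m) (1 + a - c) k) *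
        (risingFactorial (1 + a / 2) m * risingFactorial (1 + a - c) m) =
      risingFactorial (1 + a) m * risingFactorial (1 + a / 2 - c) m := by
  induction m with
  | zero => simp [hypTerm, risingFactorial_zero]
  | succ m ih =>
    have h := sum_hypTerm_dixon_sub hd he m (m + 1)
    rw [risingFactorial_neg_natCast m.lt_succ_self, sum_sub_distrib, ← mul_sum, ← mul_sum,
      sum_range_hypTerm (m := m) (m + 1).le_succ, mul_zero, zero_mul, zero_div] at h
    simp only [risingFactorial_succ _ m]
    linear_combination (risingFactorial (1 + a / 2) m * risingFactorial (1 + a - c) m) * h +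
      (1 + a + m) * (1 + a / 2 - c + m) * ih

lemma sum_hypTerm_whipple_sub {d e : ℚ} (hd : ∀ i : ℕ, d + i ≠ 0) (he : ∀ i : ℕ, e + i ≠ 0)
    (m n : ℕ) :
    ∑ k ∈ range (n + 1),
        ((d + m + 1) * (e + m + 1) *
            hypTerm (m + 2 + 1) (-(m + 2 : ℕ)) ((d + e - 1) / 2) d e k -
          (d - m - 2) * (e - m - 2) * hypTerm (m + 1) (-m) ((d + e - 1) / 2) d e k) =
      2 * (2 * m + 3) * (risingFactorial (m + 2) n * risingFactorial (-(m + 1 : ℕ)) n *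
        risingFactorial ((d + e - 1) / 2) (n + 1)) /
          (n ! * risingFactorial d n * risingFactorial e n) := by
  induction n with
  | zero => simp [hypTerm, risingFactorial_zero, risingFactorial_succ]; ring
  | succ n ih =>
    have ha₀ : risingFactorial (m + 1) (n + 1) = (m + 1) * risingFactorial (m + 2) n := by
      rw [risingFactorial_succ_left]
      ring_nf
    have ha₁ : (m + 2) * risingFactorial (m + 2 + 1) (n + 1) =
        risingFactorial (m + 2) n * (m + 2 + n) * (m + 3 + n) := by
      rw [← risingFactorial_succ_left, risingFactorial_succ, risingFactorial_succ]
      push_cast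
      ring
    have hb₀ : -(m + 1) * risingFactorial (-m) (n + 1) =
        risingFactorial (-(m + 1 : ℕ)) n * (-(m + 1) + n) * (-m + n) := by
      have h := risingFactorial_succ_left (-(m + 1 : ℕ)) (n + 1)
      rw [risingFactorial_succ, risingFactorial_succ] at h
      push_cast at h ⊢
      rw [show -((m : ℚ) + 1) + 1 = -m by ring] at h
      linear_combination -h
    have hb₁ : risingFactorial (-(m + 2 : ℕ)) (n + 1) =
        -(m + 2) * risingFactorial (-(m + 1 : ℕ)) n := by
      rw [risingFactorial_succ_left]
      push_cast
      ring_nf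
    have := risingFactorial_ne_zero hd n
    have := risingFactorial_ne_zero he n
    have := hd n
    have := he n
    have hm₁ : (m : ℚ) + 1 ≠ 0 := by positivity
    have hm₂ : (m : ℚ) + 2 ≠ 0 := by positivity
    rw [sum_range_succ, ih, hypTerm, hypTerm, hb₁, ha₀, Nat.factorial_succ,
      eq_div_of_mul_eq hm₂ ((mul_comm _ _).trans ha₁),
      eq_div_of_mul_eq (neg_ne_zero.mpr hm₁) ((mul_comm _ _).trans hb₀)]
    simp only [risingFactorial_succ _ (n + 1), risingFactorial_succ _ n]
    push_cast
    field_simp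
    ring

theorem sum_hypTerm_whipple {d e : ℚ} (hd : ∀ i : ℕ, d + i ≠ 0) (he : ∀ i : ℕ, e + i ≠ 0)
    (n : ℕ) :
    (∑ k ∈ range (2 * n + 1),
        hypTerm (2 * n + 1) (-(2 * n : ℕ)) ((d + e - 1) / 2) d e k) *
        (risingFactorial ((d + 1) / 2) n * risingFactorial ((e + 1) / 2) n) =
      risingFactorial (1 - d / 2) n * risingFactorial (1 - e / 2) n := by
  induction n with
  | zero => simp [hypTerm, risingFactorial_zero]
  | succ n ih =>
    have h := sum_hypTerm_whipple_sub hd he (2 * n) (2 * n + 2)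
    rw [risingFactorial_neg_natCast (Nat.lt_succ_self _), sum_sub_distrib, ← mul_sum, ← mul_sum,
      sum_range_hypTerm (m := 2 * n) (by lia), mul_zero, zero_mul, mul_zero,
      zero_div] at h
    simp only [risingFactorial_succ _ n]
    push_cast [mul_add_one] at h ih ⊢
    linear_combination (risingFactorial ((d + 1) / 2) n * risingFactorial ((e + 1) / 2) n) / 4 * h +
      (1 - d / 2 + n) * (1 - e / 2 + n) * ih

-- `n / 2` is a natural quotient in `range` and as the index of `risingFactorial`, but a rational
-- one in the parameters, where `1 / 2 + n * j - n * j - n / 2 = -(n / 2 : ℕ)` makes the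
-- series terminate.
lemma sum_hypTerm_dixon_half {n : ℕ} (hn : n % 2 = 1) (j : ℕ) :
    (∑ k ∈ range (n / 2 + 1), hypTerm (1 / 2 + n * j + n * j) (1 / 2 + n * j - n * j - n / 2)
      (1 / 2 + n * j + n / 2) (1 + 2 * (n * j) + n / 2) (1 + n * j - n / 2) k) *
        (risingFactorial (5 / 4 + n * j) (n / 2) * risingFactorial (1 + n * j - n / 2) (n / 2)) =
      risingFactorial (3 / 2 + (n * j + n * j)) (n / 2) *
        risingFactorial (3 / 4 - n / 2) (n / 2) := by
  have hm : ((n / 2 : ℕ) : ℚ) = n / 2 - 1 / 2 := by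
    have : (n : ℚ) = 2 * (n / 2 : ℕ) + 1 := mod_cast (show n = 2 * (n / 2) + 1 by lia)
    linarith
  have hne (i : ℕ) : 1 + (1 / 2 + n * j + n * j) - (1 / 2 + n * j + n / 2) + (i : ℚ) ≠ 0 := by
    intro h₀
    have : 2 + 2 * (n * j) + 2 * i = n := by
      qify
      linear_combination 2 * h₀
    lia
  have h := sum_hypTerm_dixon (a := 1 / 2 + n * j + n * j) (c := 1 / 2 + n * j + n / 2)
    (fun i ↦ by positivity) hne (n / 2)
  rwa [hm, show -((n : ℚ) / 2 - 1 / 2) = 1 / 2 + n * j - n * j - n / 2 by ring,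
    show 1 + (1 / 2 + n * j + n * j) + ((n : ℚ) / 2 - 1 / 2) = 1 + 2 * (n * j) + n / 2 by ring,
    show 1 + (1 / 2 + n * j + n * j) - (1 / 2 + n * j + (n : ℚ) / 2) = 1 + n * j - n / 2 by ring,
    show 1 + (1 / 2 + n * j + n * j) / 2 = 5 / 4 + (n : ℚ) * j by ring,
    show 1 + (1 / 2 + n * j + n * j) = 3 / 2 + ((n : ℚ) * j + n * j) by ring,
    show 5 / 4 + n * j - (1 / 2 + n * j + (n : ℚ) / 2) = 3 / 4 - n / 2 by ring] at h

end Hypergeometric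

section HalfCoeff

/-- The `k`-th Taylor coefficient `(1/2)_k / k!` of `(1 - x) ^ (-1/2)`, whose cube is the summand
of the truncated hypergeometric series. -/
def halfCoeff (k : ℕ) : ℚ := risingFactorial (1 / 2) k / k !

lemma halfCoeff_eq_centralBinom_mul (k : ℕ) :
    halfCoeff k = k.centralBinom * (1 / 2) ^ (2 * k) := by
  induction k with
  | zero => simp [halfCoeff, risingFactorial_zero]
  | succ k ih =>
    have hrec : ((k + 1 : ℕ) : ℚ) * (k + 1).centralBinom = 2 * (2 * k + 1) * k.centralBinom :=
      mod_cast k.succ_mul_centralBinom_succ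
    rw [halfCoeff, div_eq_iff (Nat.cast_ne_zero.mpr k.factorial_ne_zero)] at ih
    rw [halfCoeff, div_eq_iff (Nat.cast_ne_zero.mpr (k + 1).factorial_ne_zero),
      risingFactorial_succ, ih, Nat.factorial_succ, Nat.cast_mul, mul_add_one, pow_add]
    linear_combination -(1 / 2) ^ (2 * k) * (1 / 2) ^ 2 * (k ! : ℚ) * hrec

lemma halfCoeff_add (n k : ℕ) :
    halfCoeff (n + k) =
      halfCoeff n * (risingFactorial (1 / 2 + n) k / risingFactorial (1 + n) k) := by
  simp only [halfCoeff, ← risingFactorial_one_left, risingFactorial_add, mul_div_mul_comm]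

lemma sum_halfCoeff_cube_mul_prod (n : ℕ) :
    ∑ k ∈ range (2 * n + 1),
      halfCoeff k ^ 3 * ∏ i ∈ range k, (1 - ((4 * n + 1 : ℚ) / (2 * i + 1)) ^ 2) =
        halfCoeff n ^ 2 := by
  have hterm (k : ℕ) :
      halfCoeff k ^ 3 * ∏ i ∈ range k, (1 - ((4 * n + 1 : ℚ) / (2 * i + 1)) ^ 2) =
        hypTerm (2 * n + 1) (-(2 * n : ℕ)) ((1 + 1 - 1) / 2) 1 1 k := by
    have h := risingFactorial_sub_mul_add (s := 1 / 2) (fun i ↦ by positivity) (2 * n + 1 / 2) k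
    have hdiv (i : ℕ) : (2 * n + 1 / 2 : ℚ) / (1 / 2 + i) = (4 * n + 1) / (2 * i + 1) := by
      rw [div_eq_div_iff (by positivity) (by positivity)]
      ring
    simp only [hdiv] at h
    rw [show (1 / 2 : ℚ) - (2 * n + 1 / 2) = -(2 * n : ℕ) by push_cast; ring,
      show (1 / 2 : ℚ) + (2 * n + 1 / 2) = 2 * n + 1 by ring] at h
    rw [hypTerm, mul_comm (risingFactorial (2 * n + 1) k), h, risingFactorial_one_left,
      add_sub_cancel_right, halfCoeff]
    ring
  have hne (i : ℕ) : (1 : ℚ) + i ≠ 0 := by positivity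
  have h := sum_hypTerm_whipple hne hne n
  rw [add_self_div_two, show (1 : ℚ) - 1 / 2 = 1 / 2 by norm_num] at h
  rw [sum_congr rfl fun k _ ↦ hterm k, halfCoeff, ← risingFactorial_one_left, div_pow,
    eq_div_iff (pow_ne_zero 2 (risingFactorial_ne_zero hne n)), sq, sq, h]

lemma mul_risingFactorial_div_eq_halfCoeff_sq_mul (n : ℕ) :
    (4 * n + 1) * risingFactorial (3 / 4) (2 * n) / risingFactorial (5 / 4) (2 * n) =
      halfCoeff n ^ 2 * ((∏ i ∈ range n, (1 - ((n + 1 / 4 : ℚ) / (1 / 2 + i)) ^ 2)) /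
        ∏ i ∈ range n, (1 - ((n + 1 / 4 : ℚ) / (1 + i)) ^ 2)) := by
  have hnum : risingFactorial (3 / 4) (2 * n) =
      (-1) ^ n * (risingFactorial (1 / 2) n ^ 2 *
        ∏ i ∈ range n, (1 - ((n + 1 / 4 : ℚ) / (1 / 2 + i)) ^ 2)) := by
    rw [← risingFactorial_sub_mul_add (fun i ↦ by positivity), two_mul, risingFactorial_add,
      risingFactorial_reflect, mul_assoc]
    ring_nf
  have hden : risingFactorial (5 / 4) (2 * n) = (4 * n + 1) *
      ((-1) ^ n * (risingFactorial 1 n ^ 2 *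
        ∏ i ∈ range n, (1 - ((n + 1 / 4 : ℚ) / (1 + i)) ^ 2))) := by
    have hsucc := risingFactorial_succ_left (1 / 4) (2 * n)
    rw [two_mul, add_assoc n, risingFactorial_add, risingFactorial_reflect,
      risingFactorial_succ_left, ← two_mul] at hsucc
    rw [← risingFactorial_sub_mul_add (fun i ↦ by positivity),
      show (1 : ℚ) - (n + 1 / 4) = 1 - 1 / 4 - n by ring,
      show (1 : ℚ) + (n + 1 / 4) = 1 / 4 + n + 1 by ring]
    rw [show (1 / 4 + 1 : ℚ) = 5 / 4 by norm_num] at hsucc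
    linear_combination -4 * hsucc
  have hn : (4 * n + 1 : ℚ) ≠ 0 := by positivity
  have hsign : ((-1) ^ n : ℚ) ≠ 0 := pow_ne_zero n (by norm_num)
  rw [hnum, hden, mul_div_mul_left _ _ hn, mul_div_mul_left _ _ hsign, mul_div_mul_comm, ← div_pow,
    risingFactorial_one_left, halfCoeff]

end HalfCoeff

section Valuation

variable {R Γ ι : Type*} [CommRing R] [LinearOrderedCommMonoidWithZero Γ]

lemma valuation_prod_le_one (v : Valuation R Γ) {s : Finset ι} {f : ι → R}
    (hf : ∀ i ∈ s, v (f i) ≤ 1) : v (∏ i ∈ s, f i) ≤ 1 := by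
  rw [map_prod]
  exact prod_le_one' hf

lemma valuation_mul_sub_mul_le (v : Valuation R Γ) {a a' b b' : R} {γ : Γ} (ha : v a ≤ 1)
    (hb' : v b' ≤ 1) (haa' : v (a - a') ≤ γ) (hbb' : v (b - b') ≤ γ) :
    v (a * b - a' * b') ≤ γ := by
  rw [show a * b - a' * b' = a * (b - b') + (a - a') * b' by ring]
  refine v.map_add_le ?_ ?_ <;> rw [map_mul]
  · exact mul_le_of_le_one_of_le ha hbb'
  · exact mul_le_of_le_of_le_one haa' hb'

lemma valuation_prod_sub_prod_le (v : Valuation R Γ) {s : Finset ι} {f g : ι → R} {γ : Γ}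
    (hf : ∀ i ∈ s, v (f i) ≤ 1) (hg : ∀ i ∈ s, v (g i) ≤ 1)
    (hfg : ∀ i ∈ s, v (f i - g i) ≤ γ) : v (∏ i ∈ s, f i - ∏ i ∈ s, g i) ≤ γ := by
  induction s using Finset.cons_induction with
  | empty => simp
  | cons i s hi ih =>
    simp only [mem_cons, forall_eq_or_imp] at hf hg hfg
    rw [prod_cons, prod_cons]
    exact valuation_mul_sub_mul_le v hf.1 (valuation_prod_le_one v hg.2) hfg.1
      (ih hf.2 hg.2 hfg.2)

lemma valuation_prod_one_sub_sub_one_le (v : Valuation R Γ) {s : Finset ι} {δ : ι → R} {γ : Γ}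
    (hγ : γ ≤ 1) (hδ : ∀ i ∈ s, v (δ i) ≤ γ) : v (∏ i ∈ s, (1 - δ i) - 1) ≤ γ := by
  have h := valuation_prod_sub_prod_le v (f := fun i ↦ 1 - δ i) (g := fun _ ↦ 1) (s := s) (γ := γ)
    (fun i hi ↦ v.map_sub_le v.map_one.le ((hδ i hi).trans hγ)) (fun _ _ ↦ v.map_one.le)
    (fun i hi ↦ by rw [sub_sub_cancel_left, v.map_neg]; exact hδ i hi)
  rwa [prod_const_one] at h

lemma valuation_prod_one_sub_sub_le (v : Valuation R Γ) {s : Finset ι} {δ : ι → R} {γ : Γ}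
    (hγ : γ ≤ 1) (hδ : ∀ i ∈ s, v (δ i) ≤ γ) :
    v (∏ i ∈ s, (1 - δ i) - (1 - ∑ i ∈ s, δ i)) ≤ γ ^ 2 := by
  induction s using Finset.cons_induction with
  | empty => simp
  | cons i s hi ih =>
    simp only [mem_cons, forall_eq_or_imp] at hδ
    have hsum : v (∑ i ∈ s, δ i) ≤ γ := v.map_sum_le hδ.2
    have hfactor : v (1 - δ i) ≤ 1 := v.map_sub_le v.map_one.le (hδ.1.trans hγ)
    rw [prod_cons, sum_cons, show (1 - δ i) * ∏ i ∈ s, (1 - δ i) - (1 - (δ i + ∑ i ∈ s, δ i)) =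
      (1 - δ i) * (∏ i ∈ s, (1 - δ i) - (1 - ∑ i ∈ s, δ i)) + δ i * ∑ i ∈ s, δ i by ring]
    refine v.map_add_le ?_ ?_ <;> rw [map_mul]
    · exact mul_le_of_le_one_of_le hfactor (ih hδ.2)
    · exact (mul_le_mul' hδ.1 hsum).trans_eq (sq γ).symm

lemma valuation_div_sub_div_le {K Γ : Type*} [Field K] [LinearOrderedCommGroupWithZero Γ]
    (v : Valuation K Γ) {a a' b b' : K} {γ : Γ} (ha' : v a' ≤ 1)
    (hb : v b = 1) (hb' : v b' = 1) (haa' : v (a - a') ≤ γ) (hbb' : v (b - b') ≤ γ) :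
    v (a / b - a' / b') ≤ γ := by
  have hb₀ : b ≠ 0 := v.ne_zero_iff.mp (hb ▸ one_ne_zero)
  have hb₀' : b' ≠ 0 := v.ne_zero_iff.mp (hb' ▸ one_ne_zero)
  rw [div_sub_div _ _ hb₀ hb₀', map_div₀, map_mul, hb, hb', mul_one, div_one, mul_comm b,
    show a * b' - a' * b = (a - a') * b' - a' * (b - b') by ring]
  refine v.map_sub_le ?_ ?_ <;> rw [map_mul]
  · exact mul_le_of_le_of_le_one haa' hb'.le
  · exact mul_le_of_le_one_of_le ha' hbb'

-- The deviations `d`, `e`, `-d - e` add up to zero, so the terms linear in them cancel.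
lemma valuation_cube_sub_mul_le (v : Valuation R Γ) {z d e : R} {γ : Γ} (hγ : γ ≤ 1)
    (hz : v z ≤ 1) (hd : v d ≤ γ) (he : v e ≤ γ) :
    v (z ^ 3 - (z + d) * (z + e) * (z - d - e)) ≤ γ ^ 2 := by
  have hde : v (d + e) ≤ γ := v.map_add_le hd he
  have hγ₂ {x y : R} (hx : v x ≤ γ) (hy : v y ≤ γ) : v (x * y) ≤ γ ^ 2 := by
    rw [map_mul, sq]
    exact mul_le_mul' hx hy
  rw [show z ^ 3 - (z + d) * (z + e) * (z - d - e) =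
    z * ((d + e) * (d + e)) + d * e * (d + e - z) by ring]
  refine v.map_add_le ?_ ?_ <;> rw [map_mul]
  · exact mul_le_of_le_one_of_le hz (hγ₂ hde hde)
  · exact mul_le_of_le_of_le_one (hγ₂ hd he) (v.map_sub_le (hde.trans hγ) hz)

end Valuation

section PadicValuation

variable {p : ℕ} [Fact p.Prime]

local notation "ν" => Rat.padicValuation

lemma padicValuation_natCast_le_one (n : ℕ) : ν p n ≤ 1 :=
  Int.padicValuation_le_one p n

lemma padicValuation_natCast_eq_one {n : ℕ} (h : ¬ p ∣ n) : ν p n = 1 :=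
  Int.padicValuation_eq_one_iff.mpr (mt Int.natCast_dvd_natCast.mp h)

lemma padicValuation_self_lt_one : ν p p < 1 :=
  Int.padicValuation_lt_one_iff.mpr dvd_rfl

lemma padicValuation_natCast_le_self {n : ℕ} (h : p ∣ n) : ν p n ≤ ν p p := by
  obtain ⟨k, rfl⟩ := h
  rw [Nat.cast_mul, map_mul]
  exact mul_le_of_le_one_right' (padicValuation_natCast_le_one k)

lemma padicValuation_pow_div_le_one {r n : ℕ} (hn : n ≠ 0) (h : n < p ^ (r + 1)) :
    ν p (p ^ r / n) ≤ 1 := by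
  have hp : p.Prime := Fact.out
  obtain ⟨e, u, hu, rfl⟩ := Nat.exists_eq_pow_mul_and_not_dvd hn p hp.ne_one
  have he : p ^ e < p ^ (r + 1) :=
    (Nat.le_mul_of_pos_right _ (Nat.pos_of_ne_zero (right_ne_zero_of_mul hn))).trans_lt h
  have her : e ≤ r := Nat.lt_succ_iff.mp ((Nat.pow_lt_pow_iff_right hp.one_lt).mp he)
  have hp₀ : (p : ℚ) ≠ 0 := Nat.cast_ne_zero.mpr hp.ne_zero
  rw [Nat.cast_mul, Nat.cast_pow, ← div_div, div_eq_mul_inv (_ ^ r), ← pow_sub₀ _ hp₀ her,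
    map_div₀, map_pow, padicValuation_natCast_eq_one hu, div_one]
  exact pow_le_one' padicValuation_self_lt_one.le _

lemma exists_int_mul_eq_pow_mul {x : ℚ} {r : ℕ} (h : ν p x ≤ ν p p ^ r) :
    ∃ a b : ℤ, ¬ (p : ℤ) ∣ b ∧ x * b = (p : ℚ) ^ r * a := by
  have hp₀ : (p : ℚ) ≠ 0 := Nat.cast_ne_zero.mpr (Fact.out : p.Prime).ne_zero
  have hint : ν p (x / p ^ r) ≤ 1 := by
    rw [map_div₀, map_pow]
    exact div_le_one_of_le₀ h zero_le
  refine ⟨(x / p ^ r).num, (x / p ^ r).den, ?_, ?_⟩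
  · exact mt Int.natCast_dvd_natCast.mp (Rat.padicValuation_le_one_iff.mp hint)
  · rw [Int.cast_natCast, ← Rat.mul_den_eq_num (x / p ^ r)]
    field_simp

lemma padicValuation_half (hp : p ≠ 2) : ν p (1 / 2) = 1 := by
  have h2 : ν p (2 : ℕ) = 1 := padicValuation_natCast_eq_one
    (mt (Nat.prime_dvd_prime_iff_eq Fact.out Nat.prime_two).mp hp)
  rw [map_div₀, map_one, ← Nat.cast_two, h2, div_one]

lemma padicValuation_quarter (hp : p ≠ 2) : ν p (1 / 4) = 1 := by
  rw [show (1 / 4 : ℚ) = (1 / 2) ^ 2 by norm_num, map_pow, padicValuation_half hp, one_pow]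

lemma padicValuation_self_div_two (hp : p ≠ 2) : ν p ((p : ℚ) / 2) = ν p p := by
  rw [div_eq_mul_one_div, map_mul, padicValuation_half hp, mul_one]

lemma padicValuation_add_natCast_le_one {a : ℚ} (ha : ν p a ≤ 1) (n : ℕ) : ν p (a + n) ≤ 1 :=
  Valuation.map_add_le _ ha (padicValuation_natCast_le_one n)

lemma padicValuation_risingFactorial_le_one {a : ℚ} (ha : ν p a ≤ 1) (k : ℕ) :
    ν p (risingFactorial a k) ≤ 1 :=
  valuation_prod_le_one _ fun i _ ↦ padicValuation_add_natCast_le_one ha i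

lemma padicValuation_risingFactorial_le {a : ℚ} (ha : ν p a ≤ 1) {j k : ℕ} (hj : j < k) :
    ν p (risingFactorial a k) ≤ ν p (a + j) := by
  rw [risingFactorial, ← mul_prod_erase _ _ (mem_range.mpr hj), map_mul]
  exact mul_le_of_le_one_right'
    (valuation_prod_le_one _ fun i _ ↦ padicValuation_add_natCast_le_one ha i)

lemma padicValuation_risingFactorial_eq_one_of_sub_lt {a b : ℚ} {k : ℕ}
    (hb : ∀ i < k, ν p (b + i) = 1) (hab : ν p (a - b) < 1) : ν p (risingFactorial a k) = 1 := by
  rw [risingFactorial, map_prod]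
  refine prod_eq_one fun i hi ↦ ?_
  have hbi := hb i (mem_range.mp hi)
  rw [← hbi]
  exact Valuation.map_eq_of_sub_lt _ (by rwa [add_sub_add_right_eq_sub, hbi])

lemma padicValuation_risingFactorial_eq_one {a : ℚ} (ha : ν p (a - 1) < 1) {k : ℕ} (hk : k < p) :
    ν p (risingFactorial a k) = 1 := by
  refine padicValuation_risingFactorial_eq_one_of_sub_lt (fun i hi ↦ ?_) ha
  rw [add_comm, ← Nat.cast_succ]
  exact padicValuation_natCast_eq_one (Nat.not_dvd_of_pos_of_lt i.succ_pos (by lia))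

lemma padicValuation_risingFactorial_cube_sub_le {s d e : ℚ} (hs : ν p s ≤ 1)
    (hd : ν p d ≤ ν p p) (he : ν p e ≤ ν p p) (k : ℕ) :
    ν p (risingFactorial s k ^ 3 - risingFactorial (s + d) k * risingFactorial (s + e) k *
      risingFactorial (s - d - e) k) ≤ ν p p ^ 2 := by
  have hd₁ := hd.trans padicValuation_self_lt_one.le
  have he₁ := he.trans padicValuation_self_lt_one.le
  simp only [risingFactorial, ← prod_pow, ← prod_mul_distrib]
  refine valuation_prod_sub_prod_le _ (fun i _ ↦ ?_) (fun i _ ↦ ?_) fun i _ ↦ ?_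
  · rw [map_pow]
    exact pow_le_one' (padicValuation_add_natCast_le_one hs i) 3
  · simp only [map_mul]
    refine mul_le_one' (mul_le_one' ?_ ?_) ?_ <;> apply padicValuation_add_natCast_le_one
    · exact Valuation.map_add_le _ hs hd₁
    · exact Valuation.map_add_le _ hs he₁
    · exact Valuation.map_sub_le _ (Valuation.map_sub_le _ hs hd₁) he₁
  · convert valuation_cube_sub_mul_le (ν p) padicValuation_self_lt_one.le
      (padicValuation_add_natCast_le_one hs i) hd he using 2
    ring

lemma padicValuation_cube_sub_hypTerm_le {s x h : ℚ} (hs : ν p s ≤ 1) (hx : ν p x ≤ ν p p)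
    (hh : ν p h ≤ ν p p) {k : ℕ} (hk : k < p) :
    ν p ((risingFactorial s k / risingFactorial (1 + x) k) ^ 3 -
      hypTerm (s + x) (s - x - h) (s + h) (1 + 2 * x + h) (1 + x - h) k) ≤ ν p p ^ 2 := by
  have hp : ν p p < 1 := padicValuation_self_lt_one
  have hxh : ν p (x + h) ≤ ν p p := Valuation.map_add_le _ hx hh
  have hnum := padicValuation_risingFactorial_cube_sub_le hs hx
    ((Valuation.map_neg _ (x + h)).trans_le hxh) k
  have hden := padicValuation_risingFactorial_cube_sub_le
    (Valuation.map_add_le _ (map_one _).le (hx.trans hp.le))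
    ((Valuation.map_neg _ x).trans_le hx) hxh k
  rw [show s + -(x + h) = s - x - h by ring, show s - x - -(x + h) = s + h by ring] at hnum
  rw [add_neg_cancel_right, show 1 + x + (x + h) = 1 + 2 * x + h by ring,
    show 1 + x - -x - (x + h) = 1 + x - h by ring] at hden
  have hunit {d : ℚ} (hd : ν p (d - 1) ≤ ν p p) : ν p (risingFactorial d k) = 1 :=
    padicValuation_risingFactorial_eq_one (hd.trans_lt hp) hk
  rw [div_pow, hypTerm, ← risingFactorial_one_left]
  refine valuation_div_sub_div_le _ ?_ ?_ ?_ hnum hden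
  · simp only [map_mul]
    refine mul_le_one' (mul_le_one' ?_ ?_) ?_ <;> apply padicValuation_risingFactorial_le_one
    · exact Valuation.map_add_le _ hs (hx.trans hp.le)
    · exact Valuation.map_sub_le _ (Valuation.map_sub_le _ hs (hx.trans hp.le)) (hh.trans hp.le)
    · exact Valuation.map_add_le _ hs (hh.trans hp.le)
  · rw [map_pow, hunit (by rwa [add_sub_cancel_left]), one_pow]
  · rw [map_mul, map_mul, hunit (by simp),
      hunit (by convert Valuation.map_add_le (ν p) hx hxh using 2; ring),
      hunit (by convert Valuation.map_sub_le (ν p) hx hh using 2; ring), one_mul, one_mul]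

lemma padicValuation_risingFactorial_three_halves_le (hp : p ≠ 2) {x : ℚ} (hx : ν p x ≤ ν p p) :
    ν p (risingFactorial (3 / 2 + x) (p / 2)) ≤ ν p p := by
  obtain ⟨m, hm⟩ : ∃ m, p = 2 * (m + 1) + 1 := by
    have hp₂ := (Fact.out : p.Prime).two_le
    have hodd := (Fact.out : p.Prime).eq_two_or_odd
    exact ⟨p / 2 - 1, by lia⟩
  have hlast : (3 / 2 : ℚ) + x + m = p * (1 / 2) + x := by
    rw [hm]
    push_cast
    ring
  refine (padicValuation_risingFactorial_le ?_ (show m < p / 2 by lia)).trans ?_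
  · rw [show 3 / 2 + x = 1 / 2 + (1 : ℕ) + x by push_cast; ring]
    exact Valuation.map_add_le _ (padicValuation_add_natCast_le_one (padicValuation_half hp).le _)
      (hx.trans padicValuation_self_lt_one.le)
  · rw [hlast]
    refine Valuation.map_add_le _ ?_ hx
    rw [map_mul, padicValuation_half hp, mul_one]

lemma padicValuation_risingFactorial_three_quarters_le (hp : p % 4 = 3) :
    ν p (risingFactorial (3 / 4 - p / 2) (p / 2)) ≤ ν p p := by
  obtain ⟨t, ht⟩ : ∃ t, p = 4 * t + 3 := ⟨p / 4, by lia⟩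
  have hmid : (3 / 4 : ℚ) - p / 2 + t = -(p * (1 / 4)) := by
    rw [ht]
    push_cast
    ring
  refine (padicValuation_risingFactorial_le ?_ (show t < p / 2 by lia)).trans_eq ?_
  · have hint : ν p (3 * (1 / 4) - p * (1 / 2)) ≤ 1 := by
      refine Valuation.map_sub_le _ ?_ ?_ <;> rw [map_mul]
      · rw [padicValuation_quarter (by lia), mul_one]
        exact padicValuation_natCast_le_one 3
      · rw [padicValuation_half (by lia), mul_one]
        exact padicValuation_self_lt_one.le
    convert hint using 2
    ring
  · rw [hmid, Valuation.map_neg, map_mul, padicValuation_quarter (by lia), mul_one]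

lemma padicValuation_risingFactorial_five_quarters_eq_one (hp : p % 4 = 3) {x : ℚ}
    (hx : ν p x < 1) : ν p (risingFactorial (5 / 4 + x) (p / 2)) = 1 := by
  refine padicValuation_risingFactorial_eq_one_of_sub_lt (b := 5 / 4) (fun i hi ↦ ?_)
    (by rwa [add_sub_cancel_left])
  have hndvd : ¬ p ∣ 4 * i + 5 := by
    rintro ⟨c, hc⟩
    have hc₂ : c < 2 := by
      by_contra! hc₂
      have := Nat.mul_le_mul_left p hc₂
      lia
    interval_cases c <;> lia
  rw [show (5 / 4 + i : ℚ) = 1 / 4 * (4 * i + 5 : ℕ) by push_cast; ring, map_mul,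
    padicValuation_quarter (by lia), padicValuation_natCast_eq_one hndvd, one_mul]

lemma padicValuation_sum_hypTerm_le (hp : p % 4 = 3) (j : ℕ) :
    ν p (∑ k ∈ range (p / 2 + 1), hypTerm (1 / 2 + p * j + p * j) (1 / 2 + p * j - p * j - p / 2)
      (1 / 2 + p * j + p / 2) (1 + 2 * (p * j) + p / 2) (1 + p * j - p / 2) k) ≤ ν p p ^ 2 := by
  have hp₂ : p ≠ 2 := by lia
  have hx : ν p (p * j) ≤ ν p p := by
    rw [← Nat.cast_mul]
    exact padicValuation_natCast_le_self (dvd_mul_right p j)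
  have hunit : ν p (1 + p * j - p / 2 - 1) < 1 := by
    rw [sub_right_comm, add_sub_cancel_left]
    exact (Valuation.map_sub_le _ hx (padicValuation_self_div_two hp₂).le).trans_lt
      padicValuation_self_lt_one
  have hval := congrArg (ν p) (sum_hypTerm_dixon_half (show p % 2 = 1 by lia) j)
  rw [map_mul, map_mul, map_mul, padicValuation_risingFactorial_five_quarters_eq_one hp
    (hx.trans_lt padicValuation_self_lt_one), padicValuation_risingFactorial_eq_one hunit (by lia),
    mul_one, mul_one] at hval
  rw [hval, sq]
  exact mul_le_mul' (padicValuation_risingFactorial_three_halves_le hp₂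
    (Valuation.map_add_le _ hx hx)) (padicValuation_risingFactorial_three_quarters_le hp)

lemma padicValuation_sum_risingFactorial_div_cube_le (hp : p % 4 = 3) (j : ℕ) :
    ν p (∑ k ∈ range (p / 2 + 1),
      (risingFactorial (1 / 2 + p * j) k / risingFactorial (1 + p * j) k) ^ 3) ≤ ν p p ^ 2 := by
  have hp₂ : p ≠ 2 := by lia
  have hs : ν p (1 / 2 + p * j) ≤ 1 := by
    rw [← Nat.cast_mul]
    exact padicValuation_add_natCast_le_one (padicValuation_half hp₂).le _
  have hx : ν p (p * j) ≤ ν p p := by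
    rw [← Nat.cast_mul]
    exact padicValuation_natCast_le_self (dvd_mul_right p j)
  rw [← add_sub_cancel_right (∑ k ∈ range (p / 2 + 1), _) (∑ k ∈ range (p / 2 + 1), _),
    add_sub_right_comm, ← sum_sub_distrib]
  refine Valuation.map_add_le _ (Valuation.map_sum_le _ fun k hk ↦ ?_)
    (padicValuation_sum_hypTerm_le hp j)
  exact padicValuation_cube_sub_hypTerm_le hs hx (padicValuation_self_div_two hp₂).le
    (by have := mem_range.mp hk; lia)

lemma prime_dvd_centralBinom {k : ℕ} (hk : p ≤ 2 * (k % p)) : p ∣ k.centralBinom := by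
  have hp : p.Prime := Fact.out
  have hlt : 2 * k % p < k % p := by
    have h₁ := Nat.mod_lt k hp.pos
    rw [← Nat.mul_mod_mod, Nat.mod_eq_sub_mod hk, Nat.mod_eq_of_lt (by lia)]
    lia
  have h := Choose.choose_modEq_choose_mod_mul_choose_div_nat (n := 2 * k) (k := k) (p := p)
  rw [Nat.choose_eq_zero_of_lt hlt, zero_mul] at h
  exact (Nat.modEq_zero_iff_dvd).mp h

lemma padicValuation_halfCoeff (hp : p ≠ 2) (k : ℕ) : ν p (halfCoeff k) = ν p k.centralBinom := by
  rw [halfCoeff_eq_centralBinom_mul, map_mul, map_pow, padicValuation_half hp, one_pow, mul_one]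

lemma padicValuation_halfCoeff_le_one (hp : p ≠ 2) (k : ℕ) : ν p (halfCoeff k) ≤ 1 := by
  rw [padicValuation_halfCoeff hp]
  exact padicValuation_natCast_le_one _

lemma padicValuation_halfCoeff_le_self (hp : p ≠ 2) {k : ℕ} (hk : p ≤ 2 * (k % p)) :
    ν p (halfCoeff k) ≤ ν p p := by
  rw [padicValuation_halfCoeff hp]
  exact padicValuation_natCast_le_self (prime_dvd_centralBinom hk)

lemma padicValuation_sum_halfCoeff_lower_half_le (hp : p % 4 = 3) {w : ℕ → ℚ} {γ : ℤᵐ⁰} {q : ℕ}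
    (hw : ν p (w (p * q)) ≤ γ)
    (hdiff : ∀ k ≤ p / 2, ν p (w (p * q + k) - w (p * q)) ≤ ν p p ^ 2 * γ) :
    ν p (∑ k ∈ range (p / 2 + 1), halfCoeff (p * q + k) ^ 3 * w (p * q + k)) ≤
      ν p p ^ 2 * γ := by
  have hc (k : ℕ) : ν p (halfCoeff k ^ 3) ≤ 1 := by
    rw [map_pow]
    exact pow_le_one' (padicValuation_halfCoeff_le_one (by lia) k) 3
  have hsplit (k : ℕ) : halfCoeff (p * q + k) ^ 3 * w (p * q + k) =
      halfCoeff (p * q + k) ^ 3 * (w (p * q + k) - w (p * q)) +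
        (risingFactorial (1 / 2 + p * q) k / risingFactorial (1 + p * q) k) ^ 3 *
          (halfCoeff (p * q) ^ 3 * w (p * q)) := by
    rw [halfCoeff_add, Nat.cast_mul]
    ring
  rw [sum_congr rfl fun k _ ↦ hsplit k, sum_add_distrib, ← sum_mul]
  refine Valuation.map_add_le _ (Valuation.map_sum_le _ fun k hk ↦ ?_) ?_
  · rw [map_mul]
    exact mul_le_of_le_one_of_le (hc _) (hdiff k (mem_range_succ_iff.mp hk))
  · rw [map_mul, map_mul]
    exact mul_le_mul' (padicValuation_sum_risingFactorial_div_cube_le hp q)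
      (mul_le_of_le_one_of_le (hc _) hw)

lemma padicValuation_sum_halfCoeff_upper_half_le (hp : p ≠ 2) {w : ℕ → ℚ} {γ : ℤᵐ⁰} {q : ℕ}
    (hw : ∀ k < p, ν p (w (p * q + k)) ≤ γ) :
    ν p (∑ k ∈ Ico (p / 2 + 1) p, halfCoeff (p * q + k) ^ 3 * w (p * q + k)) ≤
      ν p p ^ 2 * γ := by
  refine Valuation.map_sum_le _ fun k hk ↦ ?_
  obtain ⟨hk₁, hk₂⟩ := mem_Ico.mp hk
  have hmod : (p * q + k) % p = k := by rw [Nat.mul_add_mod, Nat.mod_eq_of_lt hk₂]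
  rw [map_mul, map_pow]
  refine mul_le_mul' (le_trans ?_ (pow_le_pow_right_of_le_one' ?_ (Nat.le_succ 2))) (hw k hk₂)
  · exact pow_le_pow_left' (padicValuation_halfCoeff_le_self hp (by lia)) 3
  · exact padicValuation_self_lt_one.le

theorem padicValuation_sum_halfCoeff_cube_mul_le (hp : p % 4 = 3) {w : ℕ → ℚ} {γ : ℤᵐ⁰} {m : ℕ}
    (hw : ∀ k < p * m + (p / 2 + 1), ν p (w k) ≤ γ)
    (hdiff : ∀ q ≤ m, ∀ k ≤ p / 2, ν p (w (p * q + k) - w (p * q)) ≤ ν p p ^ 2 * γ) :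
    ν p (∑ k ∈ range (p * m + (p / 2 + 1)), halfCoeff k ^ 3 * w k) ≤ ν p p ^ 2 * γ := by
  have hr : p / 2 + 1 ≤ p := by lia
  induction m with
  | zero =>
    simpa using padicValuation_sum_halfCoeff_lower_half_le hp (q := 0) (hw _ (by lia))
      (hdiff 0 le_rfl)
  | succ m ih =>
    rw [sum_range_add, mul_add_one, sum_range_add _ (p * m), ← sum_range_add_sum_Ico _ hr,
      ← add_assoc, ← sum_range_add, ← mul_add_one]
    refine Valuation.map_add_le _ (Valuation.map_add_le _ ?_ ?_) ?_
    · exact ih (fun k hk ↦ hw k (by lia)) fun q hq ↦ hdiff q (by lia)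
    · exact padicValuation_sum_halfCoeff_upper_half_le (by lia) fun k hk ↦ hw _ (by lia)
    · exact padicValuation_sum_halfCoeff_lower_half_le hp (hw _ (by lia)) (hdiff _ le_rfl)

lemma padicValuation_sq_div_le {n : ℕ} (hn : n ≠ 0) (h : n < p ^ 2) :
    ν p ((p : ℚ) ^ 2 / n) ≤ ν p p := by
  have := padicValuation_pow_div_le_one (r := 1) hn h
  rw [pow_one] at this
  rw [sq, mul_div_assoc, map_mul]
  exact mul_le_of_le_one_right' this

lemma padicValuation_sq_div_odd_sq_le {i : ℕ} (hi : 2 * i + 1 < p ^ 2) :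
    ν p (((p : ℚ) ^ 2 / (2 * i + 1)) ^ 2) ≤ ν p p ^ 2 := by
  rw [map_pow]
  exact pow_le_pow_left' (mod_cast padicValuation_sq_div_le (2 * i).succ_ne_zero hi) 2

lemma padicValuation_sq_div_odd_sq_eq {i : ℕ} (hi : ¬ p ∣ 2 * i + 1) :
    ν p (((p : ℚ) ^ 2 / (2 * i + 1)) ^ 2) = ν p p ^ 4 := by
  have hunit : ν p (2 * i + 1) = 1 := mod_cast padicValuation_natCast_eq_one hi
  rw [map_pow, map_div₀, map_pow, hunit, div_one, ← pow_mul]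

lemma padicValuation_sum_halfCoeff_cube_mul_sum_le (hp : p % 4 = 3) {n : ℕ}
    (hn : p ^ 2 = 4 * n + 1) :
    ν p (∑ k ∈ range (2 * n + 1),
      halfCoeff k ^ 3 * ∑ i ∈ range k, ((p : ℚ) ^ 2 / (2 * i + 1)) ^ 2) ≤ ν p p ^ 4 := by
  have hrange : 2 * n + 1 = p * (p / 2) + (p / 2 + 1) := by
    obtain ⟨t, ht⟩ : ∃ t, p = 2 * t + 1 := ⟨p / 2, by lia⟩
    have : p / 2 = t := by lia
    rw [this]
    nlinarith
  rw [hrange, pow_add (ν p p) 2 2]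
  refine padicValuation_sum_halfCoeff_cube_mul_le hp (fun k hk ↦ ?_) fun q _ k hk ↦ ?_
  · refine Valuation.map_sum_le _ fun i hi ↦ padicValuation_sq_div_odd_sq_le ?_
    have := mem_range.mp hi
    lia
  · rw [sum_range_add, add_sub_cancel_left, ← pow_add]
    refine Valuation.map_sum_le _ fun i hi ↦ (padicValuation_sq_div_odd_sq_eq ?_).le
    have hik := mem_range.mp hi
    rw [show 2 * (p * q + i) + 1 = p * (2 * q) + (2 * i + 1) by ring,
      Nat.dvd_add_right (dvd_mul_right _ _)]
    exact Nat.not_dvd_of_pos_of_lt (2 * i).succ_pos (by lia)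

theorem padicValuation_sum_halfCoeff_cube_sub_le (hp : p % 4 = 3) {n : ℕ} (hn : p ^ 2 = 4 * n + 1) :
    ν p (∑ k ∈ range (2 * n + 1), halfCoeff k ^ 3 - halfCoeff n ^ 2) ≤ ν p p ^ 4 := by
  have hpn : (4 * n + 1 : ℚ) = p ^ 2 := mod_cast hn.symm
  have hwhipple := sum_halfCoeff_cube_mul_prod n
  rw [hpn] at hwhipple
  have hsplit (k : ℕ) : halfCoeff k ^ 3 - halfCoeff k ^ 3 *
        ∏ i ∈ range k, (1 - ((p : ℚ) ^ 2 / (2 * i + 1)) ^ 2) =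
      halfCoeff k ^ 3 * ∑ i ∈ range k, ((p : ℚ) ^ 2 / (2 * i + 1)) ^ 2 -
        halfCoeff k ^ 3 * (∏ i ∈ range k, (1 - ((p : ℚ) ^ 2 / (2 * i + 1)) ^ 2) -
          (1 - ∑ i ∈ range k, ((p : ℚ) ^ 2 / (2 * i + 1)) ^ 2)) := by
    ring
  rw [← hwhipple, ← sum_sub_distrib, sum_congr rfl fun k _ ↦ hsplit k, sum_sub_distrib]
  refine Valuation.map_sub_le _ (padicValuation_sum_halfCoeff_cube_mul_sum_le hp hn)
    (Valuation.map_sum_le _ fun k hk ↦ ?_)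
  rw [map_mul, map_pow, pow_mul (ν p p) 2 2]
  refine mul_le_of_le_one_of_le (pow_le_one' (padicValuation_halfCoeff_le_one (by lia) k) 3)
    (valuation_prod_one_sub_sub_le _ (pow_le_one' padicValuation_self_lt_one.le 2) fun i hi ↦ ?_)
  have hk' := mem_range.mp hk
  have hi' := mem_range.mp hi
  exact padicValuation_sq_div_odd_sq_le (by lia)

lemma padicValuation_halfCoeff_le_of_sq (hp : p % 4 = 3) {n : ℕ} (hn : p ^ 2 = 4 * n + 1) :
    ν p (halfCoeff n) ≤ ν p p := by
  obtain ⟨t, ht⟩ : ∃ t, p = 4 * t + 3 := ⟨p / 4, by lia⟩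
  have hmod : n % p = 3 * t + 2 := by
    rw [show n = p * t + (3 * t + 2) by rw [ht] at hn ⊢; nlinarith, Nat.mul_add_mod,
      Nat.mod_eq_of_lt (by lia)]
  exact padicValuation_halfCoeff_le_self (by lia) (by lia)

lemma padicValuation_prod_one_sub_sq_div_sq_sub_one_le {c : ℚ} (hc : ν p c ≤ 1) {n : ℕ} {m : ℕ → ℕ}
    (hm₀ : ∀ i, m i ≠ 0) (hm : ∀ i < n, m i < p ^ 2) :
    ν p (∏ i ∈ range n, (1 - (c * ((p : ℚ) ^ 2 / m i)) ^ 2) - 1) ≤ ν p p ^ 2 := by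
  refine valuation_prod_one_sub_sub_one_le _ (pow_le_one' padicValuation_self_lt_one.le 2)
    fun i hi ↦ ?_
  rw [map_pow, map_mul]
  exact pow_le_pow_left'
    (mul_le_of_le_one_of_le hc (padicValuation_sq_div_le (hm₀ i) (hm i (mem_range.mp hi)))) 2

theorem padicValuation_halfCoeff_sq_sub_le (hp : p % 4 = 3) {n : ℕ} (hn : p ^ 2 = 4 * n + 1) :
    ν p (halfCoeff n ^ 2 - p ^ 2 * risingFactorial (3 / 4) (2 * n) /
      risingFactorial (5 / 4) (2 * n)) ≤ ν p p ^ 4 := by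
  have hp₂ : p ≠ 2 := by lia
  have hpn : (p : ℚ) ^ 2 = 4 * n + 1 := mod_cast hn
  have hnum : ν p (∏ i ∈ range n, (1 - ((n + 1 / 4 : ℚ) / (1 / 2 + i)) ^ 2) - 1) ≤ ν p p ^ 2 := by
    have hdiv (i : ℕ) : (n + 1 / 4 : ℚ) / (1 / 2 + i) = 1 / 2 * (p ^ 2 / (2 * i + 1 : ℕ)) := by
      rw [hpn]
      push_cast
      field_simp
      ring
    simp only [hdiv]
    exact padicValuation_prod_one_sub_sq_div_sq_sub_one_le (padicValuation_half hp₂).le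
      (fun i ↦ (2 * i).succ_ne_zero) fun i hi ↦ by lia
  have hden : ν p (∏ i ∈ range n, (1 - ((n + 1 / 4 : ℚ) / (1 + i)) ^ 2) - 1) ≤ ν p p ^ 2 := by
    have hdiv (i : ℕ) : (n + 1 / 4 : ℚ) / (1 + i) = 1 / 4 * (p ^ 2 / (i + 1 : ℕ)) := by
      rw [hpn]
      push_cast
      field_simp
      ring
    simp only [hdiv]
    exact padicValuation_prod_one_sub_sq_div_sq_sub_one_le (padicValuation_quarter hp₂).le
      (fun i ↦ i.succ_ne_zero) fun i hi ↦ by lia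
  have hunit : ν p (∏ i ∈ range n, (1 - ((n + 1 / 4 : ℚ) / (1 + i)) ^ 2)) = 1 := by
    rw [← map_one (ν p)]
    exact Valuation.map_eq_of_sub_lt _ ((map_one (ν p)).symm ▸
      hden.trans_lt (pow_lt_one' padicValuation_self_lt_one two_ne_zero))
  have hquot := valuation_div_sub_div_le (ν p) (map_one _).le hunit (map_one _) hnum hden
  rw [div_one] at hquot
  rw [hpn, mul_risingFactorial_div_eq_halfCoeff_sq_mul, ← mul_one_sub, map_mul, map_pow,
    Valuation.map_sub_swap, pow_add _ 2 2]
  exact mul_le_mul' (pow_le_pow_left' (padicValuation_halfCoeff_le_of_sq hp hn) 2) hquot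

end PadicValuation

/-- For a prime `p ≡ 3 (mod 4)`,
`∑_{k=0}^{(p^2-1)/2} (1/2)_k^3/k!^3 ≡ p^2 (3/4)_{(p^2-1)/2}/(5/4)_{(p^2-1)/2} (mod p^4)`. -/
theorem stmt7 (p : ℕ) (hp : p.Prime) (h : p % 4 = 3) :
    ∃ a b : ℤ, ¬ ((p : ℤ) ∣ b) ∧
      ((∑ k ∈ Finset.range ((p ^ 2 - 1) / 2 + 1),
          risingFactorial (1/2) k ^ 3 / (k.factorial : ℚ) ^ 3)
        - (p : ℚ) ^ 2 * risingFactorial (3/4) ((p ^ 2 - 1) / 2)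
            / risingFactorial (5/4) ((p ^ 2 - 1) / 2)) * (b : ℚ)
      = (p : ℚ) ^ 4 * (a : ℚ) := by
  have := Fact.mk hp
  obtain ⟨n, hn⟩ : ∃ n, p ^ 2 = 4 * n + 1 := by
    have hmod : p ^ 2 % 4 = 1 := by rw [Nat.pow_mod, h]
    exact ⟨p ^ 2 / 4, by lia⟩
  have hsum := padicValuation_sum_halfCoeff_cube_sub_le h hn
  have hquot := padicValuation_halfCoeff_sq_sub_le h hn
  have hdiff := Valuation.map_add_le _ hsum hquot
  rw [sub_add_sub_cancel] at hdiff
  simp only [halfCoeff, div_pow] at hdiff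
  rw [show (p ^ 2 - 1) / 2 = 2 * n by lia]
  exact exists_int_mul_eq_pow_mul hdiff
end
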